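/- arXiv:nlin/0610065 — 10 statements merged into one kernel-verified Lean document; each statement's English description precedes it below -/
import Mathlib

section
/- Let n ≥ 2 be an integer and let T be a second order operator with components p, q, r : ℂ → ℂ. If T preserves 𝒫ₙ, then p, q and r agree with polynomial functions, and hence T maps every polynomial to a function agreeing with a polynomial; explicitly, r = T[1], q = T[z] − z·T[1] and p = ½·T[z²] − z·T[z] + ½·z²·T[1]. -/
/-!
The values `T[1] = r`, `T[z] = q + z r` and `T[z²] = 2p + 2z q + z² r` form a triangular linear
system in `p, q, r`, which is solved pointwise by the stated formulas. Since `n ≥ 2`, the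
polynomials `1, z, z²` lie in `𝒫ₙ`, so `T` sends them to polynomials and the formulas exhibit
`p, q, r` as polynomials. An operator with polynomial components maps polynomials to polynomials.
-/

open Polynomial

noncomputable section

/-- Action of the second order differential operator with components `p, q, r`
on (the evaluation of) a polynomial `f`:  `T[f](z) = p(z)·f″(z) + q(z)·f′(z) + r(z)·f(z)`. -/
def SOApply (p q r : ℂ → ℂ) (f : Polynomial ℂ) (z : ℂ) : ℂ :=
  p z * (Polynomial.derivative (Polynomial.derivative f)).eval z
    + q z * (Polynomial.derivative f).eval z + r z * f.eval z

/-- `T` (with components `p, q, r`) preserves the set of polynomials `M` on the domain `D`: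
for every `f ∈ M`, `T[f]` agrees on `D` with some polynomial belonging to `M`. -/
def SOPreserves (p q r : ℂ → ℂ) (D : Set ℂ) (M : Set (Polynomial ℂ)) : Prop :=
  ∀ f ∈ M, ∃ g ∈ M, ∀ z ∈ D, SOApply p q r f z = g.eval z

/-- `𝒫ₙ`: polynomials of degree at most `n`. -/
def Pn (n : ℕ) : Set (Polynomial ℂ) := {f | f.degree ≤ (n : ℕ)}

/-- The potential invariant `v = r − q′/2 + p″/4 − (q − p′)²/(4p) + p′²/(16p)`. -/
def potentialInv (p q r : ℂ → ℂ) (z : ℂ) : ℂ :=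
  r z - deriv q z / 2 + deriv (deriv p) z / 4
    - (q z - deriv p z) ^ 2 / (4 * p z) + (deriv p z) ^ 2 / (16 * p z)

/-- First component `p̂(w) = w⁴·p(−1/w)` of the inversion of `T`. -/
def invP (p : ℂ → ℂ) (w : ℂ) : ℂ := w ^ 4 * p (-1 / w)

/-- Second component `q̂(w) = w²·q(−1/w) − 2(n−1)·w³·p(−1/w)` of the inversion of `T`. -/
def invQ (n : ℕ) (p q : ℂ → ℂ) (w : ℂ) : ℂ :=
  w ^ 2 * q (-1 / w) - 2 * ((n : ℂ) - 1) * w ^ 3 * p (-1 / w)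

/-- Third component `r̂(w) = r(−1/w) − n·w·q(−1/w) + n(n−1)·w²·p(−1/w)` of the inversion. -/
def invR (n : ℕ) (p q r : ℂ → ℂ) (w : ℂ) : ℂ :=
  r (-1 / w) - (n : ℂ) * w * q (-1 / w) + (n : ℂ) * ((n : ℂ) - 1) * w ^ 2 * p (-1 / w)

/-- `ℰ^{a,b}`: polynomials `f` with `f′(b) + a·f(b) = 0`. -/
def Eab (a b : ℂ) : Set (Polynomial ℂ) :=
  {f | (Polynomial.derivative f).eval b + a * f.eval b = 0}

/-- `ℰ^{a,b}ₙ = ℰ^{a,b} ∩ 𝒫ₙ`. -/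
def EabN (a b : ℂ) (n : ℕ) : Set (Polynomial ℂ) := Eab a b ∩ Pn n

/-- `ℰₙ`: the span of `{1, z², z³, …, zⁿ}`. -/
def En (n : ℕ) : Set (Polynomial ℂ) :=
  (Submodule.span ℂ ((fun k => (X : Polynomial ℂ) ^ k) '' ({0} ∪ Set.Icc 2 n)) :
    Set (Polynomial ℂ))

/-- `Êₙᵃ`: the span of `{1, z, …, z^{n−2}, zⁿ − a·z^{n−1}}`. -/
def EhatN (n : ℕ) (a : ℂ) : Set (Polynomial ℂ) :=
  (Submodule.span ℂ ({(X : Polynomial ℂ) ^ n - C a * X ^ (n - 1)} ∪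
      ((fun k => (X : Polynomial ℂ) ^ k) '' Set.Iic (n - 2))) : Set (Polynomial ℂ))

theorem eq_SOApply_one (p q r : ℂ → ℂ) (z : ℂ) : r z = SOApply p q r 1 z := by
  simp [SOApply]

theorem eq_SOApply_X (p q r : ℂ → ℂ) (z : ℂ) :
    q z = SOApply p q r X z - z * SOApply p q r 1 z := by
  simp [SOApply]
  ring

theorem eq_SOApply_X_sq (p q r : ℂ → ℂ) (z : ℂ) :
    p z = SOApply p q r (X ^ 2) z / 2 - z * SOApply p q r X z
      + z ^ 2 / 2 * SOApply p q r 1 z := by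
  simp [SOApply]
  ring

/-- if `T` preserves `𝒫ₙ` (`n ≥ 2`), then `p, q, r` agree with polynomials,
`T` maps every polynomial to a function agreeing with a polynomial, and explicitly
`r = T[1]`, `q = T[z] − z·T[1]`, `p = ½·T[z²] − z·T[z] + ½·z²·T[1]`. -/
theorem stmt1 (n : ℕ) (hn : 2 ≤ n) (p q r : ℂ → ℂ)
    (hT : SOPreserves p q r Set.univ (Pn n)) :
    ((∃ P : Polynomial ℂ, ∀ z : ℂ, p z = P.eval z) ∧
     (∃ Q : Polynomial ℂ, ∀ z : ℂ, q z = Q.eval z) ∧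
     (∃ R : Polynomial ℂ, ∀ z : ℂ, r z = R.eval z)) ∧
    (∀ f : Polynomial ℂ, ∃ g : Polynomial ℂ, ∀ z : ℂ, SOApply p q r f z = g.eval z) ∧
    (∀ z : ℂ, r z = SOApply p q r 1 z) ∧
    (∀ z : ℂ, q z = SOApply p q r X z - z * SOApply p q r 1 z) ∧
    (∀ z : ℂ, p z = SOApply p q r (X ^ 2) z / 2 - z * SOApply p q r X z
        + z ^ 2 / 2 * SOApply p q r 1 z) := by
  obtain ⟨g₀, -, h₀⟩ := hT 1 (degree_one_le.trans (by exact_mod_cast Nat.zero_le n))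
  obtain ⟨g₁, -, h₁⟩ := hT X (degree_X_le.trans (by exact_mod_cast (by omega : 1 ≤ n)))
  obtain ⟨g₂, -, h₂⟩ := hT (X ^ 2) ((degree_X_pow_le 2).trans (by exact_mod_cast hn))
  have hr : ∀ z, r z = g₀.eval z := fun z => by
    rw [eq_SOApply_one p q r z, h₀ z trivial]
  have hq : ∀ z, q z = (g₁ - X * g₀).eval z := fun z => by
    rw [eq_SOApply_X p q r z, h₀ z trivial, h₁ z trivial]
    simp
  have hp : ∀ z, p z = (C (1 / 2) * g₂ - X * g₁ + C (1 / 2) * X ^ 2 * g₀).eval z := fun z => by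
    rw [eq_SOApply_X_sq p q r z, h₀ z trivial, h₁ z trivial, h₂ z trivial]
    simp only [eval_add, eval_sub, eval_mul, eval_C, eval_X, eval_pow]
    ring
  refine ⟨⟨⟨_, hp⟩, ⟨_, hq⟩, ⟨_, hr⟩⟩, fun f => ?_, eq_SOApply_one p q r, eq_SOApply_X p q r,
    eq_SOApply_X_sq p q r⟩
  refine ⟨(C (1 / 2) * g₂ - X * g₁ + C (1 / 2) * X ^ 2 * g₀) * derivative (derivative f)
    + (g₁ - X * g₀) * derivative f + g₀ * f, fun z => ?_⟩
  simp only [SOApply, hp, hq, hr, eval_add, eval_mul]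
end
end

section
/- Let n ≥ 2 be an integer, let T be a second order operator with components p, q, r : ℂ → ℂ, and let T̂ be the inversion of T (for this n). Then T preserves 𝒫ₙ if and only if T maps every polynomial to a function agreeing with a polynomial on ℂ, and T̂ maps every polynomial to a function agreeing with a polynomial on ℂ∖{0}. -/
/-!
The inversion comes from the substitution `f ↦ wⁿ f(-1/w)`, which maps `𝒫ₙ` onto itself
(`exists_inversion`) and intertwines the two operators: `T̂[wⁿ f(-1/w)] = wⁿ T[f](-1/w)`
(`soApply_inversion`).

If `T` preserves `𝒫ₙ`, then so does `T̂` off the origin. As `n ≥ 2`, the polynomials `1, X, X²` lie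
in `𝒫ₙ`, and their images determine the three components, which are therefore polynomials
(`exists_poly_of_Pn`); hence both operators map all polynomials to polynomials.

Conversely, let `f ∈ 𝒫ₙ` and `T[f] = g`. Then `wⁿ g(-1/w)` is the image under `T̂` of a polynomial,
so it agrees with a polynomial off the origin, which forces `deg g ≤ n`
(`mem_Pn_of_inversion`).
-/

open Polynomial

noncomputable section

lemma eval_reflect_comp_neg {n : ℕ} {f : ℂ[X]} (hf : (f.comp (-X)).natDegree ≤ n) {w : ℂ}
    (hw : w ≠ 0) : ((f.comp (-X)).reflect n).eval w = w ^ n * f.eval (-1 / w) := by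
  let _ : Invertible w⁻¹ := invertibleOfNonzero (inv_ne_zero hw)
  have h := eval₂_reflect_mul_pow (RingHom.id ℂ) w⁻¹ n (f.comp (-X)) hf
  have h2 : ((f.comp (-X)).reflect n).eval w * w⁻¹ ^ n = f.eval (-w⁻¹) := by
    simpa [eval₂_id, eval_comp] using h
  have h3 : -1 / w = -w⁻¹ := by ring
  rw [h3, ← h2, mul_left_comm, ← mul_pow, mul_inv_cancel₀ hw, one_pow, mul_one]

/-- `𝒫ₙ` is stable under the substitution `f ↦ wⁿ f(-1/w)`. -/
lemma exists_inversion (n : ℕ) {f : ℂ[X]} (hf : f ∈ Pn n) :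
    ∃ F ∈ Pn n, ∀ w : ℂ, w ≠ 0 → F.eval w = w ^ n * f.eval (-1 / w) := by
  have hf' : f.natDegree ≤ n := natDegree_le_iff_degree_le.2 hf
  have hc : (f.comp (-X)).natDegree ≤ n := by
    rw [natDegree_comp]; simpa using hf'
  refine ⟨(f.comp (-X)).reflect n, ?_, fun w hw => ?_⟩
  · exact natDegree_le_iff_degree_le.1
      ((natDegree_reflect_le).trans (by simpa using hc))
  · exact eval_reflect_comp_neg hc hw

/-- The substitution `f ↦ wⁿ f(-1/w)` is also surjective on `𝒫ₙ`, being an involution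
up to the sign `(-1)ⁿ`. -/
lemma exists_inversion_preimage (n : ℕ) {F : ℂ[X]} (hF : F ∈ Pn n) :
    ∃ f ∈ Pn n, ∀ w : ℂ, w ≠ 0 → F.eval w = w ^ n * f.eval (-1 / w) := by
  obtain ⟨G, hG, h⟩ := exists_inversion n hF
  refine ⟨C ((-1) ^ n) * G, degree_mul_le_of_le degree_C_le hG |>.trans (by simp), fun w hw => ?_⟩
  have h1 : -1 / (-1 / w) = w := by field_simp
  rw [eval_mul, eval_C, h _ (div_ne_zero (by norm_num) hw), h1, ← mul_assoc, ← mul_assoc,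
    ← mul_pow, ← mul_pow]
  have h2 : w * -1 * (-1 / w) = 1 := by field_simp
  rw [h2]; simp

lemma hasDerivAt_inversion (f : ℂ[X]) (k : ℕ) {w : ℂ} (hw : w ≠ 0) :
    HasDerivAt (fun w : ℂ => w ^ k * f.eval (-1 / w))
      (k * w ^ (k - 1) * f.eval (-1 / w) + w ^ k * (f.derivative.eval (-1 / w) * (1 / w ^ 2)))
      w := by
  have h1 : HasDerivAt (fun w : ℂ => -1 / w) (1 / w ^ 2) w := by
    simpa [div_eq_mul_inv] using (hasDerivAt_inv hw).const_mul (-1)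
  exact (hasDerivAt_pow k w).mul ((f.hasDerivAt (-1 / w)).comp w h1)

lemma eq_of_hasDerivAt_off_zero {F : ℂ[X]} {φ : ℂ → ℂ} {φ' w : ℂ} (hw : w ≠ 0)
    (h : ∀ w : ℂ, w ≠ 0 → F.eval w = φ w) (hφ : HasDerivAt φ φ' w) :
    F.derivative.eval w = φ' := by
  have : (fun x => F.eval x) =ᶠ[nhds w] φ := by
    filter_upwards [isOpen_ne.mem_nhds hw] with x hx using h x hx
  exact (F.hasDerivAt w).unique (hφ.congr_of_eventuallyEq this)

/-- The intertwining relation `T̂[wⁿ f(-1/w)] = wⁿ T[f](-1/w)` behind the definition of `T̂`. -/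
lemma soApply_inversion {n : ℕ} (hn : 2 ≤ n) (p q r : ℂ → ℂ) {f F : ℂ[X]}
    (h : ∀ w : ℂ, w ≠ 0 → F.eval w = w ^ n * f.eval (-1 / w)) {w : ℂ} (hw : w ≠ 0) :
    SOApply (invP p) (invQ n p q) (invR n p q r) F w = w ^ n * SOApply p q r f (-1 / w) := by
  obtain ⟨m, rfl⟩ := Nat.exists_eq_add_of_le' hn
  have h1 : ∀ w : ℂ, w ≠ 0 → F.derivative.eval w =
      (m + 2) * (w ^ (m + 1) * f.eval (-1 / w)) + w ^ m * f.derivative.eval (-1 / w) := by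
    intro w hw
    rw [eq_of_hasDerivAt_off_zero hw h (hasDerivAt_inversion f (m + 2) hw)]
    have : m + 2 - 1 = m + 1 := rfl
    rw [this]
    push_cast
    generalize f.eval (-1 / w) = a
    generalize f.derivative.eval (-1 / w) = b
    field_simp
    ring
  have h2 := eq_of_hasDerivAt_off_zero hw h1
    (((hasDerivAt_inversion f (m + 1) hw).const_mul ((m : ℂ) + 2)).add
      (hasDerivAt_inversion f.derivative m hw))
  -- The exponent `m - 1` truncates at `m = 0`, where its coefficient vanishes.
  have h3 : (m : ℂ) * w ^ (m - 1) = m * w ^ m / w := by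
    rcases m with _ | m
    · simp
    · simp only [Nat.add_sub_cancel]; field_simp; ring
  rw [h3] at h2
  simp only [SOApply, invP, invQ, invR]
  rw [h2, h1 w hw, h w hw]
  simp only [Nat.add_sub_cancel]
  push_cast
  generalize f.eval (-1 / w) = a
  generalize f.derivative.eval (-1 / w) = b
  generalize f.derivative.derivative.eval (-1 / w) = c
  generalize p (-1 / w) = P
  generalize q (-1 / w) = Q
  generalize r (-1 / w) = R
  field_simp
  ring

/-- An operator mapping `𝒫ₙ`, `n ≥ 2`, to polynomials has polynomial components, which are
read off from the images of `1, X, X²`; hence it maps every polynomial to a polynomial. -/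
lemma exists_poly_of_Pn {n : ℕ} (hn : 2 ≤ n) {p q r : ℂ → ℂ} {D : Set ℂ}
    (h : ∀ f ∈ Pn n, ∃ g : ℂ[X], ∀ z ∈ D, SOApply p q r f z = g.eval z) (f : ℂ[X]) :
    ∃ g : ℂ[X], ∀ z ∈ D, SOApply p q r f z = g.eval z := by
  have hX : ∀ k ≤ 2, (X ^ k : ℂ[X]) ∈ Pn n := fun k hk =>
    (degree_X_pow_le k).trans (by exact_mod_cast hk.trans hn)
  obtain ⟨g0, h0⟩ := h _ (hX 0 (by norm_num))
  obtain ⟨g1, h1⟩ := h _ (hX 1 (by norm_num))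
  obtain ⟨g2, h2⟩ := h _ (hX 2 le_rfl)
  refine ⟨C (1 / 2) * (g2 - 2 * X * g1 + X ^ 2 * g0) * f.derivative.derivative
    + (g1 - X * g0) * f.derivative + g0 * f, fun z hz => ?_⟩
  have e0 := h0 z hz
  have e1 := h1 z hz
  have e2 := h2 z hz
  simp [SOApply] at e0 e1 e2
  simp only [SOApply, eval_add, eval_sub, eval_mul, eval_pow, eval_X, eval_C, eval_ofNat,
    ← e0, ← e1, ← e2]
  ring

/-- If `wⁿ g(-1/w)` extends polynomially over the origin, then `deg g ≤ n`. -/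
lemma mem_Pn_of_inversion {n : ℕ} {g k : ℂ[X]}
    (h : ∀ w : ℂ, w ≠ 0 → w ^ n * g.eval (-1 / w) = k.eval w) : g ∈ Pn n := by
  refine natDegree_le_iff_degree_le.1 ?_
  by_contra! hlt
  obtain ⟨d, hd⟩ := Nat.exists_eq_add_of_lt hlt
  -- With `N = deg g > n`, the polynomial `w ^ N * g (-1 / w)` is divisible by `w`, although its
  -- value at `0` is the leading coefficient of `g` up to sign.
  have hc : (g.comp (-X)).natDegree = g.natDegree := by rw [natDegree_comp]; simp
  have hpoly : (g.comp (-X)).reflect g.natDegree = X ^ (d + 1) * k := by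
    refine eq_of_infinite_eval_eq _ _ ((Set.finite_singleton (0 : ℂ)).infinite_compl.mono ?_)
    intro w hw
    have hw : w ≠ 0 := hw
    have hw' : w ^ g.natDegree = w ^ (d + 1) * w ^ n := by rw [hd]; ring
    change eval w _ = eval w _
    rw [eval_reflect_comp_neg hc.le hw, eval_mul, ← h w hw, eval_pow, eval_X, hw', mul_assoc]
  have h0 := congrArg (fun s => s.coeff 0) hpoly
  simp only [mul_coeff_zero, coeff_X_pow] at h0
  have h1 : (g.comp (-X)).coeff g.natDegree = 0 := by
    simpa [coeff_reflect, revAt_le] using h0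
  rw [← hc, coeff_natDegree, leadingCoeff_eq_zero] at h1
  rw [h1] at hc
  simp at hc
  omega

/-- for `n ≥ 2`, `T` preserves `𝒫ₙ` iff `T` maps every polynomial to a
function agreeing with a polynomial on `ℂ`, and its inversion `T̂` maps every polynomial
to a function agreeing with a polynomial on `ℂ∖{0}`. -/
theorem stmt2 (n : ℕ) (hn : 2 ≤ n) (p q r : ℂ → ℂ) :
    SOPreserves p q r Set.univ (Pn n) ↔
      ((∀ f : Polynomial ℂ, ∃ g : Polynomial ℂ, ∀ z : ℂ, SOApply p q r f z = g.eval z) ∧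
       (∀ f : Polynomial ℂ, ∃ g : Polynomial ℂ, ∀ w : ℂ, w ≠ 0 →
          SOApply (invP p) (invQ n p q) (invR n p q r) f w = g.eval w)) := by
  constructor
  · intro h
    have h' : ∀ f ∈ Pn n, ∃ g : ℂ[X], ∀ z ∈ (Set.univ : Set ℂ), SOApply p q r f z = g.eval z :=
      fun f hf => let ⟨g, _, hg⟩ := h f hf; ⟨g, hg⟩
    refine ⟨fun f => ?_, exists_poly_of_Pn (D := {w | w ≠ 0}) hn fun F hF => ?_⟩
    · simpa using exists_poly_of_Pn hn h' f
    · obtain ⟨f, hf, hfF⟩ := exists_inversion_preimage n hF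
      obtain ⟨g, hg, hgf⟩ := h f hf
      obtain ⟨G, _, hG⟩ := exists_inversion n hg
      refine ⟨G, fun w hw => ?_⟩
      rw [soApply_inversion hn p q r hfF hw, hgf _ trivial, hG w hw]
  · rintro ⟨h, h'⟩ f hf
    obtain ⟨g, hg⟩ := h f
    obtain ⟨F, _, hF⟩ := exists_inversion n hf
    obtain ⟨k, hk⟩ := h' F
    refine ⟨g, mem_Pn_of_inversion (k := k) fun w hw => ?_, fun z _ => hg z⟩
    rw [← hg, ← hk w hw, soApply_inversion hn p q r hF hw]
end
end

section
/- Let n ≥ 2 be an integer. A second order operator T with components p, q, r : ℂ → ℂ preserves 𝒫ₙ if and only if T is a (complex) linear combination of the following nine operators: z⁴D_zz − 2(n−1)z³D_z + n(n−1)z²; z³D_zz − 2(n−1)z²D_z + n(n−1)z; z²D_zz; zD_zz; D_zz; z²D_z − nz; zD_z; D_z; 1. In particular, if T preserves 𝒫ₙ then p agrees with a polynomial of degree at most 4. -/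
/-!
Applying `T` to `1`, `z`, `z²` shows that the components of an operator preserving `𝒫ₙ` are
polynomials `P`, `Q`, `R`. For polynomial components, the coefficient of `z^(k+d)` in `T[z^k]` is
the value at `k` of the quadratic `k(k-1)·P_{d+2} + k·Q_{d+1} + R_d`, so `T` preserves `𝒫ₙ` if and
only if, for every `d`, this quadratic vanishes at all `k ≤ n` with `k + d > n`
(`preserves_iff_symbol`).

For `d ≥ 3` it has the three roots `n`, `n-1`, `n-2`, so it is zero and `P`, `Q`, `R` have degrees
at most `4`, `3`, `2`. For `d = 2` it has the roots `n` and `n-1`, so it is a multiple of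
`(k-n)(k-n+1)`, which leaves a one-parameter family. For `d = 1` the only condition is the root
`n`, which leaves a two-parameter family. For `d ≤ 0` there is no condition, and the remaining
coefficients `P_0, P_1, P_2, Q_0, Q_1, R_0` are free. These nine parameters are the coefficients
of the nine listed operators.
-/

open Polynomial

noncomputable section

/-- The second order operator with polynomial components `P, Q, R`, as a linear endomorphism of
the polynomial ring. -/
def polyOp (P Q R : ℂ[X]) : ℂ[X] →ₗ[ℂ] ℂ[X] :=
  LinearMap.mulLeft ℂ P ∘ₗ derivative ∘ₗ derivative + LinearMap.mulLeft ℂ Q ∘ₗ derivative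
    + LinearMap.mulLeft ℂ R

lemma polyOp_apply (P Q R f : ℂ[X]) :
    polyOp P Q R f = P * derivative (derivative f) + Q * derivative f + R * f := rfl

/-- The coefficient of `X ^ (k + d)` in the image of `X ^ k`, for a shift `d ≥ 0`. -/
lemma coeff_polyOp_X_pow (P Q R : ℂ[X]) (k d : ℕ) :
    (polyOp P Q R (X ^ k)).coeff (k + d) =
      (k : ℂ) * ((k : ℂ) - 1) * P.coeff (d + 2) + (k : ℂ) * Q.coeff (d + 1) + R.coeff d := by
  rw [polyOp_apply]
  rcases k with _ | _ | k
  · simp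
  · have h : (0 + 1 + d) = d + 1 := by ring
    simp [h]
  · have h1 : derivative ((X : ℂ[X]) ^ (k + 2)) = C ((k : ℂ) + 2) * X ^ (k + 1) := by
      rw [derivative_X_pow]
      push_cast
      rfl
    have h2 : derivative (C ((k : ℂ) + 2) * (X : ℂ[X]) ^ (k + 1))
        = C (((k : ℂ) + 2) * ((k : ℂ) + 1)) * X ^ k := by
      rw [derivative_C_mul, derivative_X_pow, C_mul]
      simp [mul_assoc]
    rw [show k + 1 + 1 = k + 2 from rfl, h1, h2]
    simp only [coeff_add, mul_left_comm _ (C _) _, coeff_C_mul]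
    rw [show k + 2 + d = (d + 2) + k by ring, coeff_mul_X_pow,
      show d + 2 + k = (d + 1) + (k + 1) by ring, coeff_mul_X_pow,
      show d + 1 + (k + 1) = d + (k + 2) by ring, coeff_mul_X_pow]
    push_cast
    ring

lemma polyOp_preserves_iff (n : ℕ) (P Q R : ℂ[X]) :
    (∀ f ∈ Pn n, polyOp P Q R f ∈ Pn n) ↔
      ∀ k d : ℕ, k ≤ n → n < k + d →
        (k : ℂ) * ((k : ℂ) - 1) * P.coeff (d + 2) + (k : ℂ) * Q.coeff (d + 1) + R.coeff d = 0 := by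
  constructor
  · intro h k d hk hd
    rw [← coeff_polyOp_X_pow]
    have hX : (X : ℂ[X]) ^ k ∈ Pn n := by
      simp only [Pn, Set.mem_ofPred_eq, degree_X_pow]
      exact_mod_cast hk
    exact (degree_le_iff_coeff_zero _ _).1 (h _ hX) _ (by exact_mod_cast hd)
  · intro h f hf
    have hf' : f.natDegree ≤ n := natDegree_le_iff_degree_le.2 hf
    refine (degree_le_iff_coeff_zero _ _).2 fun m hm => ?_
    have hm : n < m := by exact_mod_cast hm
    -- Expand `f` in monomials; each contributes a multiple of a vanishing coefficient.
    rw [f.as_sum_range_C_mul_X_pow' (Nat.lt_succ_of_le hf'), map_sum, finsetSum_coeff]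
    refine Finset.sum_eq_zero fun k hk => ?_
    have hk : k ≤ n := Nat.lt_succ_iff.1 (Finset.mem_range.1 hk)
    obtain ⟨d, rfl⟩ := Nat.exists_eq_add_of_le (hk.trans hm.le)
    rw [← smul_eq_C_mul, map_smul, coeff_smul, coeff_polyOp_X_pow, h k d hk hm, smul_zero]

lemma SOApply_eval (P Q R f : ℂ[X]) (z : ℂ) :
    SOApply P.eval Q.eval R.eval f z = (polyOp P Q R f).eval z := by
  simp [SOApply, polyOp_apply]

/-- For polynomial components, preservation of `𝒫ₙ` is a condition on the quadratic polynomials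
in `k` attached to each shift `d`. -/
lemma preserves_iff_symbol (n : ℕ) (P Q R : ℂ[X]) :
    SOPreserves P.eval Q.eval R.eval Set.univ (Pn n) ↔
      ∀ k d : ℕ, k ≤ n → n < k + d →
        (k : ℂ) * ((k : ℂ) - 1) * P.coeff (d + 2) + (k : ℂ) * Q.coeff (d + 1) + R.coeff d = 0 := by
  rw [← polyOp_preserves_iff]
  refine forall₂_congr fun f _ => ⟨?_, fun h => ⟨_, h, fun z _ => SOApply_eval P Q R f z⟩⟩
  rintro ⟨g, hg, hz⟩
  have : polyOp P Q R f = g :=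
    Polynomial.funext fun z => by rw [← SOApply_eval, hz z (Set.mem_univ z)]
  rwa [this]

/-- Testing on `1`, `z`, `z²` recovers the components, which are therefore polynomials. -/
lemma exists_poly_components {n : ℕ} (hn : 2 ≤ n) {p q r : ℂ → ℂ}
    (h : SOPreserves p q r Set.univ (Pn n)) :
    ∃ P Q R : ℂ[X], p = P.eval ∧ q = Q.eval ∧ r = R.eval := by
  have hX : ∀ k ≤ 2, (X : ℂ[X]) ^ k ∈ Pn n := by
    intro k hk
    simp only [Pn, Set.mem_ofPred_eq, degree_X_pow]
    exact_mod_cast hk.trans hn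
  obtain ⟨g0, -, h0⟩ := h _ (hX 0 (by norm_num))
  obtain ⟨g1, -, h1⟩ := h _ (hX 1 (by norm_num))
  obtain ⟨g2, -, h2⟩ := h _ (hX 2 (by norm_num))
  simp [SOApply] at h0 h1 h2
  refine ⟨C (1 / 2) * (g2 - 2 * X * (g1 - X * g0) - X ^ 2 * g0), g1 - X * g0, g0, ?_, ?_, ?_⟩ <;>
    funext z <;> simp [← h0, ← h1, ← h2] <;> ring

/-- The symbol condition of `preserves_iff_symbol`, solved for the coefficients of `P, Q, R`. -/
lemma symbol_solution {n : ℕ} (hn : 2 ≤ n) {P Q R : ℂ[X]}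
    (h : ∀ k d : ℕ, k ≤ n → n < k + d →
      (k : ℂ) * ((k : ℂ) - 1) * P.coeff (d + 2) + (k : ℂ) * Q.coeff (d + 1) + R.coeff d = 0) :
    P.natDegree ≤ 4 ∧ Q.natDegree ≤ 3 ∧ R.natDegree ≤ 2 ∧
      Q.coeff 3 = -2 * ((n : ℂ) - 1) * P.coeff 4 ∧
      R.coeff 2 = (n : ℂ) * ((n : ℂ) - 1) * P.coeff 4 ∧
      R.coeff 1 = -(n : ℂ) * ((n : ℂ) - 1) * P.coeff 3 - (n : ℂ) * Q.coeff 2 := by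
  obtain ⟨m, rfl⟩ := Nat.exists_eq_add_of_le' hn
  have hhigh : ∀ e : ℕ, P.coeff (e + 5) = 0 ∧ Q.coeff (e + 4) = 0 ∧ R.coeff (e + 3) = 0 := by
    intro e
    have a0 := h m (e + 3) (by omega) (by omega)
    have a1 := h (m + 1) (e + 3) (by omega) (by omega)
    have a2 := h (m + 2) (e + 3) (by omega) (by omega)
    simp only [add_assoc, Nat.reduceAdd] at a0 a1 a2
    push_cast at a0 a1 a2
    -- The second difference of the quadratic is twice its leading coefficient.
    have hP : P.coeff (e + 5) = 0 := by linear_combination (a2 - 2 * a1 + a0) / 2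
    rw [hP] at a0 a1
    have hQ : Q.coeff (e + 4) = 0 := by linear_combination a1 - a0
    rw [hQ] at a0
    exact ⟨hP, hQ, by linear_combination a0⟩
  have b1 := h (m + 1) 2 (by omega) (by omega)
  have b2 := h (m + 2) 2 (by omega) (by omega)
  have c2 := h (m + 2) 1 (by omega) (by omega)
  simp only [Nat.reduceAdd] at b1 b2 c2
  push_cast at b1 b2 c2 ⊢
  refine ⟨?_, ?_, ?_, ?_, ?_, ?_⟩
  · refine natDegree_le_iff_coeff_eq_zero.2 fun N hN => ?_
    obtain ⟨e, rfl⟩ := Nat.exists_eq_add_of_le' (show 5 ≤ N by omega)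
    exact (hhigh e).1
  · refine natDegree_le_iff_coeff_eq_zero.2 fun N hN => ?_
    obtain ⟨e, rfl⟩ := Nat.exists_eq_add_of_le' (show 4 ≤ N by omega)
    exact (hhigh e).2.1
  · refine natDegree_le_iff_coeff_eq_zero.2 fun N hN => ?_
    obtain ⟨e, rfl⟩ := Nat.exists_eq_add_of_le' (show 3 ≤ N by omega)
    exact (hhigh e).2.2
  · linear_combination b2 - b1
  · linear_combination ((m : ℂ) + 2) * b1 - ((m : ℂ) + 1) * b2
  · linear_combination c2

/-- for `n ≥ 2`, `T` preserves `𝒫ₙ` iff `T` is a linear combination of the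
nine listed operators; in particular, if `T` preserves `𝒫ₙ` then `p` agrees with a
polynomial of degree at most 4. -/
theorem stmt3 (n : ℕ) (hn : 2 ≤ n) (p q r : ℂ → ℂ) :
    (SOPreserves p q r Set.univ (Pn n) ↔
      ∃ c : Fin 9 → ℂ, ∀ (f : Polynomial ℂ) (z : ℂ),
        SOApply p q r f z =
          c 0 * (z ^ 4 * (Polynomial.derivative (Polynomial.derivative f)).eval z
                  - 2 * ((n : ℂ) - 1) * z ^ 3 * (Polynomial.derivative f).eval z
                  + (n : ℂ) * ((n : ℂ) - 1) * z ^ 2 * f.eval z)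
          + c 1 * (z ^ 3 * (Polynomial.derivative (Polynomial.derivative f)).eval z
                  - 2 * ((n : ℂ) - 1) * z ^ 2 * (Polynomial.derivative f).eval z
                  + (n : ℂ) * ((n : ℂ) - 1) * z * f.eval z)
          + c 2 * (z ^ 2 * (Polynomial.derivative (Polynomial.derivative f)).eval z)
          + c 3 * (z * (Polynomial.derivative (Polynomial.derivative f)).eval z)
          + c 4 * (Polynomial.derivative (Polynomial.derivative f)).eval z
          + c 5 * (z ^ 2 * (Polynomial.derivative f).eval z - (n : ℂ) * z * f.eval z)
          + c 6 * (z * (Polynomial.derivative f).eval z)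
          + c 7 * (Polynomial.derivative f).eval z
          + c 8 * f.eval z) ∧
    (SOPreserves p q r Set.univ (Pn n) →
      ∃ P : Polynomial ℂ, P.degree ≤ 4 ∧ ∀ z : ℂ, p z = P.eval z) := by
  refine ⟨⟨fun h => ?_, ?_⟩, fun h => ?_⟩
  · obtain ⟨P, Q, R, rfl, rfl, rfl⟩ := exists_poly_components hn h
    obtain ⟨dP, dQ, dR, hQ3, hR2, hR1⟩ := symbol_solution hn ((preserves_iff_symbol n P Q R).1 h)
    -- The operator with coefficient `c 1` also contributes `-2(n-1)` to `Q_2`, hence `c 5`.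
    refine ⟨![P.coeff 4, P.coeff 3, P.coeff 2, P.coeff 1, P.coeff 0,
      Q.coeff 2 + 2 * ((n : ℂ) - 1) * P.coeff 3, Q.coeff 1, Q.coeff 0, R.coeff 0], fun f z => ?_⟩
    rw [SOApply, eval_eq_sum_range' (Nat.lt_succ_of_le dP), eval_eq_sum_range' (Nat.lt_succ_of_le dQ),
      eval_eq_sum_range' (Nat.lt_succ_of_le dR)]
    simp only [Finset.sum_range_succ, Finset.sum_range_zero, hQ3, hR2, hR1]
    simp
    ring
  · rintro ⟨c, hc⟩
    let P : ℂ[X] := C (c 0) * X ^ 4 + C (c 1) * X ^ 3 + C (c 2) * X ^ 2 + C (c 3) * X + C (c 4)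
    let Q : ℂ[X] := C (-2 * ((n : ℂ) - 1) * c 0) * X ^ 3
      + C (-2 * ((n : ℂ) - 1) * c 1 + c 5) * X ^ 2 + C (c 6) * X + C (c 7)
    let R : ℂ[X] := C ((n : ℂ) * ((n : ℂ) - 1) * c 0) * X ^ 2
      + C ((n : ℂ) * ((n : ℂ) - 1) * c 1 - n * c 5) * X + C (c 8)
    have key : SOPreserves P.eval Q.eval R.eval Set.univ (Pn n) := by
      refine (preserves_iff_symbol n P Q R).2 fun k d hk hd => ?_
      rcases d with _ | _ | _ | d
      · omega
      · obtain rfl : k = n := by omega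
        simp only [P, Q, R, coeff_add, coeff_C_mul, coeff_X_pow, coeff_X, coeff_C]
        simp
        ring
      · obtain rfl | rfl : k = n ∨ n = k + 1 := by omega
        all_goals
          simp only [P, Q, R, coeff_add, coeff_C_mul, coeff_X_pow, coeff_X, coeff_C]
          simp
          ring
      · simp only [P, Q, R, coeff_add, coeff_C_mul, coeff_X_pow, coeff_X, coeff_C]
        simp
    intro f hf
    obtain ⟨g, hg, hz⟩ := key f hf
    refine ⟨g, hg, fun z hzD => ?_⟩
    rw [hc, ← hz z hzD]
    simp [SOApply, P, Q, R]
    ring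
  · obtain ⟨P, Q, R, rfl, rfl, rfl⟩ := exists_poly_components hn h
    exact ⟨P, natDegree_le_iff_degree_le.1
      (symbol_solution hn ((preserves_iff_symbol n P Q R).1 h)).1, fun _ => rfl⟩
end
end

section
/- Let n ≥ 2 be an integer, let p ∈ ℂ[z] be a degree-4 polynomial with four distinct roots z₁, z₂, z₃, z₄, and let k₁, k₂, k₃, k₄, λ ∈ ℂ satisfy k₁+k₂+k₃+k₄ = −n−1. Then there exist polynomials q, r ∈ ℂ[z] such that: the second order operator T with components p, q, r preserves 𝒫ₙ; kᵢ = ½·(q(zᵢ)/p′(zᵢ) − 1) for each i; and for every z with p(z) ≠ 0 the potential invariant of T satisfies v(z) = −Σᵢ₌₁⁴ (kᵢ² − 1/16)·p′(zᵢ)/(z − zᵢ) + λ. -/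
/-!
Write `p = a ∏ (z - zᵢ)`. The values `q(zᵢ) = (2kᵢ + 1) p'(zᵢ)` force
`q = ∑ᵢ (2kᵢ + 1) p / (z - zᵢ)`, a cubic whose leading coefficient is `-2(n - 1)a` because
`∑ kᵢ = -n - 1`. That leading coefficient, together with suitable coefficients of `z²` and `z`
in the quadratic `r`, is what makes `T` preserve `𝒫ₙ` (`soPreserves_of_coeffs`): the terms of
degree `n + 1` and `n + 2` in `T[zⁿ⁻¹]` and `T[zⁿ]` cancel. The constant term of `r` stays free.

For the potential, `q - p' = ∑ᵢ 2kᵢ p / (z - zᵢ)`, so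
`(q - p')² / (4p) - p'² / (16p)` is
`∑ᵢ (kᵢ² - 1/16) p / (z - zᵢ)² + ∑_{i<j} 2(kᵢkⱼ - 1/16) p / ((z - zᵢ)(z - zⱼ))`
(`pole_expansion`). The mixed terms are polynomial, and each diagonal term is
`p'(zᵢ) / (z - zᵢ)` plus a quadratic (`diag_split`). Hence `v` minus the prescribed polar part is
a quadratic polynomial; its `z²` and `z` coefficients vanish by the choice of `r`, and the
constant term of `r` is chosen to make it equal to `λ`.
-/

open Polynomial

noncomputable section

/-- The two cancellations in the top degrees that make a second order operator with quartic
leading part preserve the polynomials of degree at most `l + 2`. -/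
lemma soPreserves_of_coeffs (l : ℕ) (a p3 p2 p1 p0 q3 q2 q1 q0 r2 r1 r0 : ℂ)
    (hq3 : q3 = -2 * (l + 1) * a) (hr2 : r2 = (l + 2) * (l + 1) * a)
    (hr1 : r1 = -(l + 2) * (l + 1) * p3 - (l + 2) * q2) (P Q R : ℂ[X])
    (hP : P = C a * X ^ 4 + C p3 * X ^ 3 + C p2 * X ^ 2 + C p1 * X + C p0)
    (hQ : Q = C q3 * X ^ 3 + C q2 * X ^ 2 + C q1 * X + C q0)
    (hR : R = C r2 * X ^ 2 + C r1 * X + C r0) :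
    SOPreserves P.eval Q.eval R.eval Set.univ (Pn (l + 2)) := by
  let T : ℂ[X] → ℂ[X] := fun f =>
    P * derivative (derivative f) + Q * derivative f + R * f
  have hT : ∀ f, T f = P * derivative (derivative f) + Q * derivative f + R * f := fun _ => rfl
  have hC2 : (C (2 : ℂ)) = 2 := map_ofNat C 2
  have hTadd : ∀ f g, T (f + g) = T f + T g := by
    intro f g; simp only [hT, derivative_add]; ring
  have hTmul : ∀ (c : ℂ) f, T (C c * f) = C c * T f := by
    intro c f; simp only [hT, derivative_C_mul]; ring
  -- the two exceptional monomials
  have htop : (T (X ^ (l + 2))).natDegree ≤ l + 2 := by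
    have : T (X ^ (l + 2)) = X ^ l * (C ((l + 2) * (l + 1) * p2 + (l + 2) * q1 + r0) * X ^ 2
        + C ((l + 2) * (l + 1) * p1 + (l + 2) * q0) * X + C ((l + 2) * (l + 1) * p0)) := by
      rw [hT, hP, hQ, hR, hq3, hr2, hr1]
      simp [hC2]
      ring
    rw [this]
    refine natDegree_mul_le.trans ?_
    rw [natDegree_X_pow]
    gcongr
    exact natDegree_quadratic_le
  have hsub : (T (X ^ (l + 1))).natDegree ≤ l + 2 := by
    rcases l with _ | l
    · have : T (X ^ (0 + 1)) = C (q2 + r1) * X ^ 2 + C (q1 + r0) * X + C q0 := by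
        rw [hT, hP, hQ, hR, hq3, hr2, hr1]
        simp
        ring
      rw [this]
      exact natDegree_quadratic_le
    · have : T (X ^ (l + 1 + 1)) = X ^ l * (
          C ((l + 2) * (l + 1) * p3 + (l + 2) * q2 + r1) * X ^ 3
          + C ((l + 2) * (l + 1) * p2 + (l + 2) * q1 + r0) * X ^ 2
          + C ((l + 2) * (l + 1) * p1 + (l + 2) * q0) * X + C ((l + 2) * (l + 1) * p0)) := by
        rw [hT, hP, hQ, hR, hq3, hr2, hr1]
        simp [hC2]
        ring
      rw [this]
      refine natDegree_mul_le.trans ?_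
      rw [natDegree_X_pow]
      have := natDegree_cubic_le (R := ℂ) (a := (l + 2) * (l + 1) * p3 + (l + 2) * q2 + r1)
        (b := (l + 2) * (l + 1) * p2 + (l + 2) * q1 + r0)
        (c := (l + 2) * (l + 1) * p1 + (l + 2) * q0) (d := (l + 2) * (l + 1) * p0)
      omega
  -- every lower monomial is harmless for degree reasons alone
  have hlow : ∀ m, m ≤ l → (T (X ^ m)).natDegree ≤ l + 2 := by
    intro m hm
    have h4 : P.natDegree ≤ 4 := by rw [hP]; compute_degree
    have h3 : Q.natDegree ≤ 3 := by rw [hQ]; exact natDegree_cubic_le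
    have h2 : R.natDegree ≤ 2 := by rw [hR]; exact natDegree_quadratic_le
    rw [hT]
    have hR' : (R * X ^ m).natDegree ≤ l + 2 := by
      refine natDegree_mul_le.trans ?_
      rw [natDegree_X_pow]; omega
    rcases m with _ | _ | m
    · simpa using hR'.trans' (by simp)
    · have : (Q * derivative (X ^ (0 + 1))).natDegree ≤ l + 2 := by simp; omega
      refine natDegree_add_le_of_degree_le (natDegree_add_le_of_degree_le ?_ this) hR'
      simp
    · have e1 : derivative (X ^ (m + 2) : ℂ[X]) = C ((m : ℂ) + 2) * X ^ (m + 1) := by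
        simp [hC2]; ring
      have e2 : derivative (derivative (X ^ (m + 2) : ℂ[X]))
          = C (((m : ℂ) + 2) * (m + 1)) * X ^ m := by
        rw [e1]; simp [hC2]; ring
      have d1 := natDegree_C_mul_X_pow_le ((m : ℂ) + 2) (m + 1)
      have d2 := natDegree_C_mul_X_pow_le (((m : ℂ) + 2) * (m + 1)) m
      refine natDegree_add_le_of_degree_le (natDegree_add_le_of_degree_le ?_ ?_) hR'
      · rw [show m + 1 + 1 = m + 2 from rfl, e2]
        exact natDegree_mul_le.trans (by omega)
      · rw [show m + 1 + 1 = m + 2 from rfl, e1]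
        exact natDegree_mul_le.trans (by omega)
  intro f hf
  refine ⟨T f, ?_, fun w _ => by simp [T, SOApply]⟩
  have hf' : f.natDegree ≤ l + 2 := natDegree_le_of_degree_le hf
  apply degree_le_of_natDegree_le
  have hTsum : ∀ N, T (∑ i ∈ Finset.range N, C (f.coeff i) * X ^ i)
      = ∑ i ∈ Finset.range N, C (f.coeff i) * T (X ^ i) := by
    intro N
    induction N with
    | zero => simp [hT]
    | succ N ih => rw [Finset.sum_range_succ, Finset.sum_range_succ, hTadd, ih, hTmul]
  rw [f.as_sum_range_C_mul_X_pow' (show f.natDegree < l + 3 by omega), hTsum]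
  refine natDegree_sum_le_of_forall_le _ _ fun m hm => ?_
  refine (natDegree_C_mul_le _ _).trans ?_
  have : m < l + 3 := Finset.mem_range.mp hm
  rcases (by omega : m ≤ l ∨ m = l + 1 ∨ m = l + 2) with h | rfl | rfl
  · exact hlow m h
  · exact hsub
  · exact htop

/-- Here `xᵢ` stands for `z - zᵢ`: the expansion of `(q - p')² / (4p) - p'² / (16p)` into
diagonal and mixed terms. -/
lemma pole_expansion (a x y u v k l m o : ℂ) (ha : a ≠ 0) (hx : x ≠ 0) (hy : y ≠ 0)
    (hu : u ≠ 0) (hv : v ≠ 0) :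
    (2 * a * (k * (y * u * v) + l * (x * u * v) + m * (x * y * v) + o * (x * y * u))) ^ 2
        / (4 * (a * (x * y * u * v)))
      - (a * (y * u * v + x * u * v + x * y * v + x * y * u)) ^ 2
        / (16 * (a * (x * y * u * v)))
    = (k ^ 2 - 1 / 16) * (a * (y * u * v) / x) + (l ^ 2 - 1 / 16) * (a * (x * u * v) / y)
      + (m ^ 2 - 1 / 16) * (a * (x * y * v) / u) + (o ^ 2 - 1 / 16) * (a * (x * y * u) / v)
      + 2 * a * ((k * l - 1 / 16) * (u * v) + (k * m - 1 / 16) * (y * v)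
        + (k * o - 1 / 16) * (y * u) + (l * m - 1 / 16) * (x * v)
        + (l * o - 1 / 16) * (x * u) + (m * o - 1 / 16) * (x * y)) := by
  field_simp
  ring

/-- A simple pole with its residue split off: the numerator, a cubic in `w`, is divided by
`w - s` with remainder. -/
lemma diag_split (a w s t u v : ℂ) (h : w - s ≠ 0) :
    a * ((w - t) * (w - u) * (w - v)) / (w - s)
      = a * ((s - t) * (s - u) * (s - v)) / (w - s)
        + a * (w ^ 2 + w * s + s ^ 2 - (t + u + v) * (w + s) + (t * u + t * v + u * v)) := by
  field_simp
  ring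

lemma eq_C_mul_prod {P : ℂ[X]} (hdeg : P.degree = 4) {z : Fin 4 → ℂ}
    (hinj : Function.Injective z) (hroot : ∀ i, P.eval (z i) = 0) :
    P = C P.leadingCoeff * ∏ i, (X - C (z i)) := by
  have hP0 : P ≠ 0 := by rintro rfl; simp at hdeg
  have hlc : P.leadingCoeff ≠ 0 := leadingCoeff_ne_zero.mpr hP0
  have hm : (∏ i, (X - C (z i))).Monic := monic_prod_of_monic _ _ fun i _ => monic_X_sub_C _
  have hd : (C P.leadingCoeff * ∏ i, (X - C (z i))).degree = 4 := by
    rw [degree_C_mul hlc, degree_prod]; simp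
  refine eq_of_degree_sub_lt_of_eval_index_eq (v := z) Finset.univ hinj.injOn ?_ ?_
  · simpa [hdeg] using degree_sub_lt_left (hdeg.trans hd.symm) hP0 (by simp [hm.leadingCoeff])
  · intro i _
    rw [hroot, eval_mul, eval_prod, Finset.prod_eq_zero (Finset.mem_univ i) (by simp), mul_zero]

/-- given a degree-4 polynomial `p` with distinct roots `z₁,…,z₄` and
constants `kᵢ, λ` with `k₁+k₂+k₃+k₄ = −n−1`, there exist polynomials `q, r` such that
the operator `T` with components `p, q, r` preserves `𝒫ₙ`, `kᵢ = ½(q(zᵢ)/p′(zᵢ) − 1)`,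
and the potential invariant equals the stated rational function wherever `p ≠ 0`. -/
theorem stmt4 (n : ℕ) (hn : 2 ≤ n) (P : Polynomial ℂ) (hdeg : P.degree = 4)
    (z : Fin 4 → ℂ) (hinj : Function.Injective z) (hroot : ∀ i, P.eval (z i) = 0)
    (k : Fin 4 → ℂ) (lam : ℂ)
    (hsum : k 0 + k 1 + k 2 + k 3 = -(n : ℂ) - 1) :
    ∃ Q R : Polynomial ℂ,
      SOPreserves P.eval Q.eval R.eval Set.univ (Pn n) ∧
      (∀ i, k i = (Q.eval (z i) / (Polynomial.derivative P).eval (z i) - 1) / 2) ∧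
      (∀ w : ℂ, P.eval w ≠ 0 →
        potentialInv P.eval Q.eval R.eval w =
          -(∑ i, (k i ^ 2 - 1 / 16) * (Polynomial.derivative P).eval (z i) / (w - z i))
            + lam) := by
  obtain ⟨l, rfl⟩ : ∃ l, n = l + 2 := ⟨n - 2, by omega⟩
  have hfac := eq_C_mul_prod hdeg hinj hroot
  have ha : P.leadingCoeff ≠ 0 := by
    rw [Ne, leadingCoeff_eq_zero]; rintro rfl; simp at hdeg
  generalize P.leadingCoeff = a at hfac ha
  have h01 : z 0 - z 1 ≠ 0 := sub_ne_zero.mpr (hinj.ne (by decide))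
  have h02 : z 0 - z 2 ≠ 0 := sub_ne_zero.mpr (hinj.ne (by decide))
  have h03 : z 0 - z 3 ≠ 0 := sub_ne_zero.mpr (hinj.ne (by decide))
  have h12 : z 1 - z 2 ≠ 0 := sub_ne_zero.mpr (hinj.ne (by decide))
  have h13 : z 1 - z 3 ≠ 0 := sub_ne_zero.mpr (hinj.ne (by decide))
  have h23 : z 2 - z 3 ≠ 0 := sub_ne_zero.mpr (hinj.ne (by decide))
  have h10 : z 1 - z 0 ≠ 0 := sub_ne_zero.mpr (hinj.ne (by decide))
  have h20 : z 2 - z 0 ≠ 0 := sub_ne_zero.mpr (hinj.ne (by decide))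
  have h30 : z 3 - z 0 ≠ 0 := sub_ne_zero.mpr (hinj.ne (by decide))
  have h21 : z 2 - z 1 ≠ 0 := sub_ne_zero.mpr (hinj.ne (by decide))
  have h31 : z 3 - z 1 ≠ 0 := sub_ne_zero.mpr (hinj.ne (by decide))
  have h32 : z 3 - z 2 ≠ 0 := sub_ne_zero.mpr (hinj.ne (by decide))
  simp only [Fin.sum_univ_four, Fin.forall_fin_succ]
  have hfac' : P = C a * ((X - C (z 0)) * (X - C (z 1)) * (X - C (z 2)) * (X - C (z 3))) := by
    rw [hfac, Fin.prod_univ_four]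
  clear hfac hroot hinj
  have hk3 : k 3 = -(l : ℂ) - 3 - k 0 - k 1 - k 2 := by
    push_cast at hsum; linear_combination hsum
  simp only [Fin.succ_zero_eq_one, Fin.succ_one_eq_two, show Fin.succ (2 : Fin 3) = 3 from rfl,
    IsEmpty.forall_iff, and_true]
  generalize z 0 = s at *
  generalize z 1 = t at *
  generalize z 2 = u at *
  generalize z 3 = v at *
  generalize k 0 = α at *
  generalize k 1 = β at *
  generalize k 2 = γ at *
  generalize k 3 = δ at *
  -- the coefficients of `p`
  obtain ⟨p3, hp3⟩ : ∃ x, x = -a * (s + t + u + v) := ⟨_, rfl⟩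
  obtain ⟨p2, hp2⟩ : ∃ x, x = a * (s * t + s * u + s * v + t * u + t * v + u * v) := ⟨_, rfl⟩
  obtain ⟨p1, hp1⟩ : ∃ x, x = -a * (t * u * v + s * u * v + s * t * v + s * t * u) := ⟨_, rfl⟩
  obtain ⟨p0, hp0⟩ : ∃ x, x = a * (s * t * u * v) := ⟨_, rfl⟩
  -- the coefficients of `q = ∑ (2kᵢ + 1) p / (z - zᵢ)`
  obtain ⟨q2, hq2⟩ : ∃ x, x = -a * ((2 * α + 1) * (t + u + v) + (2 * β + 1) * (s + u + v)
    + (2 * γ + 1) * (s + t + v) + (2 * δ + 1) * (s + t + u)) := ⟨_, rfl⟩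
  obtain ⟨q1, hq1⟩ : ∃ x, x = a * ((2 * α + 1) * (t * u + t * v + u * v)
    + (2 * β + 1) * (s * u + s * v + u * v) + (2 * γ + 1) * (s * t + s * v + t * v)
    + (2 * δ + 1) * (s * t + s * u + t * u)) := ⟨_, rfl⟩
  obtain ⟨q0, hq0⟩ : ∃ x, x = -a * ((2 * α + 1) * (t * u * v) + (2 * β + 1) * (s * u * v)
    + (2 * γ + 1) * (s * t * v) + (2 * δ + 1) * (s * t * u)) := ⟨_, rfl⟩
  -- the value at `0` of the quadratic identity that the potential must satisfy
  obtain ⟨r0, hr0⟩ : ∃ x, x = (α ^ 2 - 1 / 16) * (a * (s ^ 2 - (t + u + v) * s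
        + (t * u + t * v + u * v)))
      + (β ^ 2 - 1 / 16) * (a * (t ^ 2 - (s + u + v) * t + (s * u + s * v + u * v)))
      + (γ ^ 2 - 1 / 16) * (a * (u ^ 2 - (s + t + v) * u + (s * t + s * v + t * v)))
      + (δ ^ 2 - 1 / 16) * (a * (v ^ 2 - (s + t + u) * v + (s * t + s * u + t * u)))
      + 2 * a * ((α * β - 1 / 16) * (u * v) + (α * γ - 1 / 16) * (t * v)
        + (α * δ - 1 / 16) * (t * u) + (β * γ - 1 / 16) * (s * v)
        + (β * δ - 1 / 16) * (s * u) + (γ * δ - 1 / 16) * (s * t))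
      + q1 / 2 - p2 / 2 + lam := ⟨_, rfl⟩
  have hPc : P = C a * X ^ 4 + C p3 * X ^ 3 + C p2 * X ^ 2 + C p1 * X + C p0 := by
    rw [hfac', hp3, hp2, hp1, hp0]
    simp only [map_mul, map_add, map_neg]
    ring
  obtain ⟨Q, hQ⟩ : ∃ Q : ℂ[X], Q = C (-2 * (l + 1) * a) * X ^ 3 + C q2 * X ^ 2 + C q1 * X + C q0 :=
    ⟨_, rfl⟩
  obtain ⟨R, hR⟩ : ∃ R : ℂ[X], R = C ((l + 2) * (l + 1) * a) * X ^ 2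
    + C (-(l + 2) * (l + 1) * p3 - (l + 2) * q2) * X + C r0 := ⟨_, rfl⟩
  have hPe : ∀ w, P.eval w = a * ((w - s) * (w - t) * (w - u) * (w - v)) := by
    intro w; rw [hfac']; simp
  have hP'e : ∀ w, (derivative P).eval w = a * ((w - t) * (w - u) * (w - v)
      + (w - s) * (w - u) * (w - v) + (w - s) * (w - t) * (w - v)
      + (w - s) * (w - t) * (w - u)) := by
    intro w; rw [hfac']
    simp only [derivative_mul, derivative_C, derivative_sub, derivative_X, eval_mul, eval_add,
      eval_sub, eval_X, eval_C, eval_zero, eval_one]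
    ring
  have hP''e : ∀ w, (derivative (derivative P)).eval w
      = 12 * a * w ^ 2 + 6 * p3 * w + 2 * p2 := by
    intro w; rw [hPc]; simp; ring
  have hQe : ∀ w, Q.eval w = a * ((2 * α + 1) * ((w - t) * (w - u) * (w - v))
      + (2 * β + 1) * ((w - s) * (w - u) * (w - v))
      + (2 * γ + 1) * ((w - s) * (w - t) * (w - v))
      + (2 * δ + 1) * ((w - s) * (w - t) * (w - u))) := by
    intro w
    rw [hQ, hq2, hq1, hq0, hk3]
    simp only [eval_add, eval_mul, eval_C, eval_X, eval_pow]
    ring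
  have hQ'e : ∀ w, (derivative Q).eval w
      = -6 * (l + 1) * a * w ^ 2 + 2 * q2 * w + q1 := by
    intro w; rw [hQ]; simp; ring
  have hRe : ∀ w, R.eval w = (l + 2) * (l + 1) * a * w ^ 2
      + (-(l + 2) * (l + 1) * p3 - (l + 2) * q2) * w + r0 := by
    intro w; rw [hR]; simp
  refine ⟨Q, R, soPreserves_of_coeffs l a p3 p2 p1 p0 _ q2 q1 q0 _ _ r0 rfl rfl rfl P Q R
    hPc hQ hR, ?_, ?_⟩
  · refine ⟨?_, ?_, ?_, ?_⟩ <;>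
    · rw [hQe, hP'e]
      simp only [sub_self, zero_mul, mul_zero, add_zero, zero_add]
      field_simp
      ring
  · intro w hw
    rw [hPe] at hw
    simp only [mul_ne_zero_iff, and_assoc] at hw
    obtain ⟨-, hs, ht, hu, hv⟩ := hw
    have hdP : deriv P.eval = fun w => (derivative P).eval w := by
      funext x; exact P.deriv
    have hddP : deriv (fun w => (derivative P).eval w) w
        = (derivative (derivative P)).eval w := (derivative P).deriv
    have hdQ : deriv Q.eval w = (derivative Q).eval w := Q.deriv
    have hexp := pole_expansion a (w - s) (w - t) (w - u) (w - v) α β γ δ ha hs ht hu hv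
    rw [diag_split a w s t u v hs, diag_split a w t s u v ht, diag_split a w u s t v hu,
      diag_split a w v s t u hv] at hexp
    have hdiff : Q.eval w - (derivative P).eval w
        = 2 * a * (α * ((w - t) * (w - u) * (w - v)) + β * ((w - s) * (w - u) * (w - v))
          + γ * ((w - s) * (w - t) * (w - v)) + δ * ((w - s) * (w - t) * (w - u))) := by
      rw [hQe, hP'e]; ring
    have es : (derivative P).eval s = a * ((s - t) * (s - u) * (s - v)) := by rw [hP'e]; ring
    have et : (derivative P).eval t = a * ((t - s) * (t - u) * (t - v)) := by rw [hP'e]; ring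
    have eu : (derivative P).eval u = a * ((u - s) * (u - t) * (u - v)) := by rw [hP'e]; ring
    have ev : (derivative P).eval v = a * ((v - s) * (v - t) * (v - u)) := by rw [hP'e]; ring
    simp only [potentialInv, hdP, hddP, hdQ, es, et, eu, ev, hdiff]
    simp only [mul_div_assoc (_ - 1 / 16 : ℂ)]
    rw [hP'e, hPe, hRe, hQ'e, hP''e]
    -- after the polar parts cancel, a polynomial identity in `w` remains
    suffices h : (l + 2) * (l + 1) * a * w ^ 2
        + (-(l + 2) * (l + 1) * p3 - (l + 2) * q2) * w + r0
        - (-6 * (l + 1) * a * w ^ 2 + 2 * q2 * w + q1) / 2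
        + (12 * a * w ^ 2 + 6 * p3 * w + 2 * p2) / 4
        - (α ^ 2 - 1 / 16) * (a * (w ^ 2 + w * s + s ^ 2 - (t + u + v) * (w + s)
          + (t * u + t * v + u * v)))
        - (β ^ 2 - 1 / 16) * (a * (w ^ 2 + w * t + t ^ 2 - (s + u + v) * (w + t)
          + (s * u + s * v + u * v)))
        - (γ ^ 2 - 1 / 16) * (a * (w ^ 2 + w * u + u ^ 2 - (s + t + v) * (w + u)
          + (s * t + s * v + t * v)))
        - (δ ^ 2 - 1 / 16) * (a * (w ^ 2 + w * v + v ^ 2 - (s + t + u) * (w + v)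
          + (s * t + s * u + t * u)))
        - 2 * a * ((α * β - 1 / 16) * ((w - u) * (w - v)) + (α * γ - 1 / 16) * ((w - t) * (w - v))
          + (α * δ - 1 / 16) * ((w - t) * (w - u)) + (β * γ - 1 / 16) * ((w - s) * (w - v))
          + (β * δ - 1 / 16) * ((w - s) * (w - u)) + (γ * δ - 1 / 16) * ((w - s) * (w - t)))
        = lam by
      linear_combination h - hexp
    rw [hr0, hp2, hp3, hq2, hk3]
    ring
end
end

section
/- Let n ≥ 2 be an integer and let T be a second order operator with polynomial components p, q, r, where p has degree 4 with four distinct roots z₁, z₂, z₃, z₄. Suppose T preserves 𝒫ₙ, and set kᵢ = ½·(q(zᵢ)/p′(zᵢ) − 1) for i = 1,…,4. Then k₁+k₂+k₃+k₄ = −n−1, and there exists λ ∈ ℂ such that for every z with p(z) ≠ 0 the potential invariant of T satisfies v(z) = −Σᵢ₌₁⁴ (kᵢ² − 1/16)·p′(zᵢ)/(z − zᵢ) + λ. -/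
/-! Preservation of `𝒫ₙ` is only tested on the monomials `X ^ n` and `X ^ (n - 1)`; this already
bounds the degrees of `Q` and `R` by 3 and 2 and expresses `q₃`, `r₂`, `r₁` through the remaining
coefficients (`preserve_coeffs`).

Since `P = c ∏ (X - zᵢ)`, Lagrange interpolation gives `∑ Q(zᵢ) / P'(zᵢ) = q₃ / p₄`, hence the sum
of the `kᵢ`.

For the potential, `16 P v` is the polynomial `potNum P Q R`, of apparent degree 6. The coefficient
relations kill its coefficients of degree 6 and 5 (`potNum_natDegree_le`). At a root `zᵢ` it takes
the value `P'(zᵢ)² - 4 (Q(zᵢ) - P'(zᵢ))² = -16 (kᵢ² - 1/16) P'(zᵢ)²`, so after adding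
`16 ∑ (kᵢ² - 1/16) P'(zᵢ) · P / (X - zᵢ)` and subtracting the right multiple of `P`, a polynomial
of degree less than 4 with four zeros remains, which is zero. -/

open Polynomial

noncomputable section

/-- The polynomial `16 P v`, where `v` is the potential invariant. -/
def potNum (P Q R : Polynomial ℂ) : Polynomial ℂ :=
  C 16 * (P * R) - C 8 * (P * derivative Q) + C 4 * (P * derivative (derivative P))
    - C 4 * ((Q - derivative P) * (Q - derivative P)) + derivative P * derivative P

lemma potNum_eval (P Q R : Polynomial ℂ) (w : ℂ) (hw : P.eval w ≠ 0) :
    potentialInv P.eval Q.eval R.eval w = (potNum P Q R).eval w / (16 * P.eval w) := by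
  have h1 : ∀ F : Polynomial ℂ, deriv (fun x => F.eval x) = fun x => (derivative F).eval x :=
    fun F => funext fun x => F.deriv
  have h2 : deriv P.eval = (derivative P).eval := h1 P
  have h3 : deriv Q.eval = (derivative Q).eval := h1 Q
  have h4 : deriv (derivative P).eval = (derivative (derivative P)).eval := h1 _
  simp only [potentialInv, potNum, h2, h3, h4, eval_add, eval_sub, eval_mul, eval_C]
  field_simp
  ring

lemma X_mul_deriv_X_pow (m : ℕ) :
    X * derivative (derivative ((X : Polynomial ℂ) ^ (m + 1))) = C (((m : ℂ) + 1) * m) * X ^ m := by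
  rcases m with _ | m
  · simp
  · simp only [derivative_X_pow, derivative_C_mul, Nat.add_sub_cancel, C_mul, C_add, C_1]
    push_cast
    simp only [C_add, C_1, map_natCast]
    ring

/-- `T[X ^ j]` has degree at most `n` as a polynomial, not just as a function. -/
lemma preserve_poly {n : ℕ} {P Q R : Polynomial ℂ}
    (hT : SOPreserves P.eval Q.eval R.eval Set.univ (Pn n)) (j : ℕ) (hj : j ≤ n) (i : ℕ)
    (hi : n < i) :
    (P * derivative (derivative (X ^ j)) + Q * derivative (X ^ j) + R * X ^ j).coeff i = 0 := by
  obtain ⟨g, hg, h⟩ := hT (X ^ j) (by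
    change degree _ ≤ _
    rw [degree_X_pow]
    exact_mod_cast hj)
  have : P * derivative (derivative (X ^ j)) + Q * derivative (X ^ j) + R * X ^ j = g := by
    refine Polynomial.funext fun w => ?_
    rw [← h w trivial]
    simp only [SOApply, eval_add, eval_mul]
  rw [this]
  refine coeff_eq_zero_of_degree_lt (lt_of_le_of_lt hg ?_)
  exact_mod_cast hi

/-- Coefficient relations obtained from `T[X ^ n]` and `T[X ^ n] - X · T[X ^ (n - 1)]`, with
`n = m + 2`. -/
lemma preserve_coeffs {m : ℕ} {P Q R : Polynomial ℂ}
    (hT : SOPreserves P.eval Q.eval R.eval Set.univ (Pn (m + 2))) :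
    (∀ j, 3 ≤ j → Q.coeff j = -(2 * (m + 1) * P.coeff (j + 1))) ∧
    (∀ j, 1 ≤ j → R.coeff j =
      -((m + 2) * (m + 1) * P.coeff (j + 2) + (m + 2) * Q.coeff (j + 1))) := by
  have e1 : P * derivative (derivative (X ^ (m + 2))) + Q * derivative (X ^ (m + 2))
      + R * X ^ (m + 2) =
      C (((m : ℂ) + 2) * (m + 1)) * P * X ^ m + C ((m : ℂ) + 2) * Q * X ^ (m + 1)
        + R * X ^ (m + 2) := by
    simp only [derivative_X_pow, derivative_C_mul, C_mul, Nat.add_sub_cancel,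
      show m + 2 - 1 = m + 1 by omega]
    push_cast
    ring_nf
  have e2 : X * (P * derivative (derivative (X ^ (m + 1))) + Q * derivative (X ^ (m + 1))
      + R * X ^ (m + 1)) =
      C (((m : ℂ) + 1) * m) * P * X ^ m + C ((m : ℂ) + 1) * Q * X ^ (m + 1)
        + R * X ^ (m + 2) := by
    have := X_mul_deriv_X_pow m
    have h' : derivative ((X : Polynomial ℂ) ^ (m + 1)) = C ((m : ℂ) + 1) * X ^ m := by
      simp
    rw [mul_add, mul_add, mul_left_comm, this, h']
    ring
  have c1 : ∀ j, (C (((m : ℂ) + 2) * (m + 1)) * P * X ^ m + C ((m : ℂ) + 2) * Q * X ^ (m + 1)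
        + R * X ^ (m + 2)).coeff (m + 2 + j) =
      ((m : ℂ) + 2) * (m + 1) * P.coeff (j + 2) + (m + 2) * Q.coeff (j + 1) + R.coeff j := by
    intro j
    rw [coeff_add, coeff_add, show m + 2 + j = (j + 2) + m by ring, coeff_mul_X_pow,
      show j + 2 + m = (j + 1) + (m + 1) by ring, coeff_mul_X_pow,
      show j + 1 + (m + 1) = j + (m + 2) by ring, coeff_mul_X_pow, coeff_C_mul, coeff_C_mul]
  have c2 : ∀ j, (C (((m : ℂ) + 1) * m) * P * X ^ m + C ((m : ℂ) + 1) * Q * X ^ (m + 1)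
        + R * X ^ (m + 2)).coeff (m + 2 + j) =
      ((m : ℂ) + 1) * m * P.coeff (j + 2) + (m + 1) * Q.coeff (j + 1) + R.coeff j := by
    intro j
    rw [coeff_add, coeff_add, show m + 2 + j = (j + 2) + m by ring, coeff_mul_X_pow,
      show j + 2 + m = (j + 1) + (m + 1) by ring, coeff_mul_X_pow,
      show j + 1 + (m + 1) = j + (m + 2) by ring, coeff_mul_X_pow, coeff_C_mul, coeff_C_mul]
  have d1 : ∀ j, 1 ≤ j →
      ((m : ℂ) + 2) * (m + 1) * P.coeff (j + 2) + (m + 2) * Q.coeff (j + 1) + R.coeff j = 0 := by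
    intro j hj
    rw [← c1, ← e1]
    exact preserve_poly hT _ le_rfl _ (by omega)
  have d2 : ∀ j, 2 ≤ j →
      ((m : ℂ) + 1) * m * P.coeff (j + 2) + (m + 1) * Q.coeff (j + 1) + R.coeff j = 0 := by
    intro j hj
    rw [← c2, ← e2, show m + 2 + j = (m + 1 + j) + 1 by ring, coeff_X_mul]
    exact preserve_poly hT _ (by omega) _ (by omega)
  constructor
  · intro j hj
    obtain ⟨i, rfl⟩ : ∃ i, j = i + 1 := ⟨j - 1, by omega⟩
    have a := d1 i (by omega)
    have b := d2 i (by omega)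
    rw [show i + 1 + 1 = i + 2 by ring]
    linear_combination a - b
  · intro j hj
    linear_combination d1 j hj

/-- The relations between the coefficients make those of degree 6 and 5 in `potNum` cancel, so that
`v` stays bounded at infinity. -/
lemma potNum_natDegree_le {m : ℕ} {P Q R : Polynomial ℂ} (hP : P.natDegree ≤ 4)
    (hQ : ∀ j, 3 ≤ j → Q.coeff j = -(2 * (m + 1) * P.coeff (j + 1)))
    (hR : ∀ j, 1 ≤ j → R.coeff j =
      -((m + 2) * (m + 1) * P.coeff (j + 2) + (m + 2) * Q.coeff (j + 1))) :
    Q.natDegree ≤ 3 ∧ (potNum P Q R).natDegree ≤ 4 := by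
  have p0 : ∀ j, 5 ≤ j → P.coeff j = 0 := fun j hj =>
    coeff_eq_zero_of_natDegree_lt (by omega)
  have q0 : ∀ j, 4 ≤ j → Q.coeff j = 0 := fun j hj => by
    rw [hQ j (by omega), p0 _ (by omega)]; ring
  have r0 : ∀ j, 3 ≤ j → R.coeff j = 0 := fun j hj => by
    rw [hR j (by omega), p0 _ (by omega), q0 _ (by omega)]; ring
  have nQ : Q.natDegree ≤ 3 := natDegree_le_iff_coeff_eq_zero.2 fun j hj => q0 j hj
  have nR : R.natDegree ≤ 2 := natDegree_le_iff_coeff_eq_zero.2 fun j hj => r0 j hj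
  have nP1 : (derivative P).natDegree ≤ 3 := (natDegree_derivative_le P).trans (by omega)
  have nP2 : (derivative (derivative P)).natDegree ≤ 2 :=
    (natDegree_derivative_le _).trans (by omega)
  have nQ1 : (derivative Q).natDegree ≤ 2 := (natDegree_derivative_le _).trans (by omega)
  have nS : (Q - derivative P).natDegree ≤ 3 := natDegree_sub_le_of_le nQ nP1
  have n6 : (potNum P Q R).natDegree ≤ 6 := by
    have a1 := (natDegree_C_mul_le (16 : ℂ) _).trans (natDegree_mul_le_of_le hP nR)
    have a2 := (natDegree_C_mul_le (8 : ℂ) _).trans (natDegree_mul_le_of_le hP nQ1)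
    have a3 := (natDegree_C_mul_le (4 : ℂ) _).trans (natDegree_mul_le_of_le hP nP2)
    have a4 := (natDegree_C_mul_le (4 : ℂ) _).trans (natDegree_mul_le_of_le nS nS)
    have a5 := natDegree_mul_le_of_le nP1 nP1
    exact natDegree_add_le_of_degree_le (natDegree_sub_le_of_le (natDegree_add_le_of_degree_le
      (natDegree_sub_le_of_le a1 a2) a3) a4) a5
  refine ⟨nQ, natDegree_le_iff_coeff_eq_zero.2 fun i hi => ?_⟩
  have q3 := hQ 3 le_rfl
  have r1 := hR 1 le_rfl
  have r2 := hR 2 (by omega)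
  norm_num at q3 r1 r2
  rw [q3] at r2
  by_cases h6 : 6 < i
  · exact coeff_eq_zero_of_natDegree_lt (by omega)
  obtain rfl | rfl : i = 5 ∨ i = 6 := by omega
  · simp [potNum, coeff_mul, Finset.Nat.antidiagonal_succ, coeff_derivative, p0, q0, r0, q3, r1, r2]
    ring
  · simp [potNum, coeff_mul, Finset.Nat.antidiagonal_succ, coeff_derivative, p0, q0, r0, q3, r1, r2]
    ring

/-- converse characterization: if `T` with polynomial components `p, q, r`
(`p` of degree 4 with distinct roots) preserves `𝒫ₙ` (`n ≥ 2`) and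
`kᵢ = ½(q(zᵢ)/p′(zᵢ) − 1)`, then `k₁+k₂+k₃+k₄ = −n−1` and the potential invariant has
the stated form for some constant `λ`. -/
theorem stmt5 (n : ℕ) (hn : 2 ≤ n) (P Q R : Polynomial ℂ) (hdeg : P.degree = 4)
    (z : Fin 4 → ℂ) (hinj : Function.Injective z) (hroot : ∀ i, P.eval (z i) = 0)
    (hT : SOPreserves P.eval Q.eval R.eval Set.univ (Pn n))
    (k : Fin 4 → ℂ)
    (hk : ∀ i, k i = (Q.eval (z i) / (Polynomial.derivative P).eval (z i) - 1) / 2) :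
    k 0 + k 1 + k 2 + k 3 = -(n : ℂ) - 1 ∧
    ∃ lam : ℂ, ∀ w : ℂ, P.eval w ≠ 0 →
      potentialInv P.eval Q.eval R.eval w =
        -(∑ i, (k i ^ 2 - 1 / 16) * (Polynomial.derivative P).eval (z i) / (w - z i))
          + lam := by
  obtain ⟨m, rfl⟩ : ∃ m, n = m + 2 := ⟨n - 2, by omega⟩
  obtain ⟨hQ, hR⟩ := preserve_coeffs hT
  have hnat : P.natDegree = 4 := natDegree_eq_of_degree_eq_some hdeg
  obtain ⟨nQ, nN⟩ := potNum_natDegree_le hnat.le hQ hR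
  have hc : P.coeff 4 ≠ 0 := by
    rw [← hnat]
    exact leadingCoeff_ne_zero.2 fun h => by simp [h] at hdeg
  have hinjOn : Set.InjOn z ((Finset.univ : Finset (Fin 4)) : Set (Fin 4)) := hinj.injOn
  -- a polynomial of degree at most 4 without `X ^ 4` term has degree less than 4
  have deg_lt : ∀ F : Polynomial ℂ, F.natDegree ≤ 4 → F.coeff 4 = 0 →
      F.degree < (Finset.univ : Finset (Fin 4)).card := by
    intro F h1 h2
    rw [Finset.card_fin, degree_lt_iff_coeff_zero]
    intro j hj
    rcases hj.eq_or_lt with rfl | hj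
    · exact h2
    · exact coeff_eq_zero_of_natDegree_lt (by omega)
  have nodal4 : (Lagrange.nodal Finset.univ z).natDegree = 4 := by
    rw [Lagrange.natDegree_nodal, Finset.card_fin]
  have nodal_c : (Lagrange.nodal Finset.univ z).coeff 4 = 1 := by
    have := Lagrange.nodal_monic (s := Finset.univ) (v := z)
    rwa [Monic, leadingCoeff, nodal4] at this
  have hPn : P = C (P.coeff 4) * Lagrange.nodal Finset.univ z := by
    rw [← sub_eq_zero]
    refine eq_zero_of_degree_lt_of_eval_index_eq_zero Finset.univ hinjOn (deg_lt _ ?_ ?_) ?_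
    · exact natDegree_sub_le_of_le hnat.le ((natDegree_C_mul_le _ _).trans nodal4.le)
    · rw [coeff_sub, coeff_C_mul, nodal_c]; ring
    · intro i hi
      rw [eval_sub, hroot, eval_mul, Lagrange.eval_nodal_at_node hi]; ring
  have hP' : ∀ i, (derivative P).eval (z i) =
      P.coeff 4 * ∏ j ∈ Finset.univ.erase i, (z i - z j) := by
    intro i
    conv_lhs => rw [hPn]
    rw [derivative_C_mul, eval_mul, eval_C,
      Lagrange.eval_nodal_derivative_eval_node_eq (Finset.mem_univ i), Lagrange.eval_nodal]
  have hP'0 : ∀ i, (derivative P).eval (z i) ≠ 0 := by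
    intro i
    rw [hP']
    refine mul_ne_zero hc (Finset.prod_ne_zero_iff.2 fun j hj => sub_ne_zero.2 fun h => ?_)
    exact (Finset.mem_erase.1 hj).1 (hinj h).symm
  constructor
  · have hs : ∑ i, Q.eval (z i) / (derivative P).eval (z i) = Q.coeff 3 / P.coeff 4 := by
      have h3 := Lagrange.coeff_eq_sum hinjOn (P := Q)
        (deg_lt Q (by omega) (coeff_eq_zero_of_natDegree_lt (by omega)))
      simp only [Finset.card_fin] at h3
      norm_num at h3
      rw [h3, Finset.sum_div]
      refine Finset.sum_congr rfl fun i _ => ?_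
      rw [hP', div_div, mul_comm]
    rw [hQ 3 le_rfl, Fin.sum_univ_four,
      show -(2 * ((m : ℂ) + 1) * P.coeff (3 + 1)) / P.coeff 4 = -(2 * (m + 1)) by
        field_simp] at hs
    rw [hk, hk, hk, hk]
    push_cast
    linear_combination hs / 2
  · set d : Fin 4 → ℂ := fun i => (k i ^ 2 - 1 / 16) * (derivative P).eval (z i) with hd
    -- `G i` is `P / (X - zᵢ)`
    set G : Fin 4 → Polynomial ℂ :=
      fun i => C (P.coeff 4) * Lagrange.nodal (Finset.univ.erase i) z with hG
    have hPG : ∀ i, P = (X - C (z i)) * G i := by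
      intro i
      conv_lhs => rw [hPn, Lagrange.nodal_eq_mul_nodal_erase (Finset.mem_univ i)]
      rw [hG]; ring
    have hGdeg : ∀ i, (G i).natDegree ≤ 3 := by
      intro i
      refine (natDegree_C_mul_le _ _).trans ?_
      rw [Lagrange.natDegree_nodal, Finset.card_erase_of_mem (Finset.mem_univ i),
        Finset.card_fin]
    have hGdiag : ∀ i, (G i).eval (z i) = (derivative P).eval (z i) := by
      intro i
      rw [hP', hG]
      simp only [eval_mul, eval_C, Lagrange.eval_nodal]
    have hGoff : ∀ i j, i ≠ j → (G i).eval (z j) = 0 := by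
      intro i j hij
      simp only [hG, eval_mul]
      rw [Lagrange.eval_nodal_at_node (Finset.mem_erase.2 ⟨hij.symm, Finset.mem_univ j⟩), mul_zero]
    set S : Polynomial ℂ := ∑ i, C (16 * d i) * G i with hS
    have hSdeg : S.natDegree ≤ 3 :=
      natDegree_sum_le_of_forall_le _ _ fun i _ => (natDegree_C_mul_le _ _).trans (hGdeg i)
    set a : ℂ := (potNum P Q R).coeff 4 / P.coeff 4 with ha
    have key : potNum P Q R + S - C a * P = 0 := by
      refine eq_zero_of_degree_lt_of_eval_index_eq_zero Finset.univ hinjOn (deg_lt _ ?_ ?_) ?_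
      · exact natDegree_sub_le_of_le (natDegree_add_le_of_degree_le nN (by omega))
          ((natDegree_C_mul_le _ _).trans hnat.le)
      · rw [coeff_sub, coeff_add, coeff_C_mul,
          coeff_eq_zero_of_natDegree_lt (show S.natDegree < 4 by omega), ha]
        field_simp
        ring
      · intro i _
        have hSi : S.eval (z i) = 16 * d i * (derivative P).eval (z i) := by
          rw [hS, eval_finsetSum, Finset.sum_eq_single i]
          · rw [eval_mul, eval_C, hGdiag]
          · intro j _ hj
            rw [eval_mul, hGoff j i hj, mul_zero]
          · simp
        have hq : Q.eval (z i) = (2 * k i + 1) * (derivative P).eval (z i) := by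
          have := hP'0 i
          rw [hk]; field_simp; ring
        simp only [eval_sub, eval_add, hSi, potNum, eval_mul, eval_C, hroot, hq, hd]
        ring
    refine ⟨a / 16, fun w hw => ?_⟩
    have hkw := congrArg (Polynomial.eval w) key
    simp only [eval_sub, eval_add, eval_mul, eval_C, eval_zero] at hkw
    have hSw : S.eval w = 16 * P.eval w * ∑ i, d i / (w - z i) := by
      rw [hS, eval_finsetSum, Finset.mul_sum]
      refine Finset.sum_congr rfl fun i _ => ?_
      have h1 : P.eval w = (w - z i) * (G i).eval w := by
        conv_lhs => rw [hPG i]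
        simp
      have h2 : w - z i ≠ 0 := fun h => hw (by rw [h1, h, zero_mul])
      rw [eval_mul, eval_C, h1]
      field_simp
    rw [potNum_eval P Q R w hw, div_eq_iff (by simpa using hw)]
    rw [hSw] at hkw
    linear_combination hkw
end
end

section
/- Let n ≥ 2 and let α, β, γ, δ ∈ ℂ with αδ − βγ = 1, and set ζ(w) = (αw+β)/(γw+δ). If α ≠ 0, then { the polynomial w ↦ (γw+δ)ⁿ·f(ζ(w)) : f ∈ ℰₙ } = ℰ^{a,b}ₙ, where a = −nαγ and b = −β/α. If α = 0, then { the polynomial w ↦ (γw+δ)ⁿ·f(ζ(w)) : f ∈ ℰₙ } = Êₙᵃ, where a = −nδ/γ. -/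
/-!
Write `A = αX + β` and `B = γX + δ`. On `𝒫ₙ` the action is `f ↦ ∑ₖ fₖ Aᵏ Bⁿ⁻ᵏ` (`act`), a
bijection of `𝒫ₙ` whose inverse comes from the inverse matrix (`act_act_inv`); a polynomial is
determined by its values off the zero of `B`, so the left-hand sets are exactly `act '' ℰₙ`
(`mobius_image_iff`).

All three spaces are cut out of `𝒫ₙ` by one linear condition: `f₁ = 0` for `ℰₙ` (`mem_En_iff`),
`f′(b) + a f(b) = 0` for `ℰ^{a,b}ₙ`, and `fₙ₋₁ + a fₙ = 0` for `Êₙᵃ` (`mem_EhatN_iff`). Applied to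
`act f`, the last two conditions turn out to be nonzero multiples of `f₁`. When `α ≠ 0`, the terms
with `k ≥ 2` vanish to second order at `b = -β/α` (`act_functional_ne_zero`). When `α = 0`, the
factor `A` is constant, so the terms with `k ≥ 2` have degree at most `n - 2`
(`act_functional_zero`).
-/

open Polynomial

noncomputable section

/-- The homogenised action of the matrix `(α β; γ δ)` on polynomials of degree at most `n`:
`∑ₖ fₖ (αX+β)ᵏ (γX+δ)ⁿ⁻ᵏ`. Coefficients of `f` beyond `n` are ignored. -/
def act (n : ℕ) (α β γ δ : ℂ) (f : ℂ[X]) : ℂ[X] :=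
  ∑ k ∈ Finset.range (n + 1),
    C (f.coeff k) * (C α * X + C β) ^ k * (C γ * X + C δ) ^ (n - k)

lemma eval_act {n : ℕ} {α β γ δ : ℂ} {f : ℂ[X]} (hf : f.natDegree ≤ n) {w : ℂ}
    (hw : γ * w + δ ≠ 0) :
    (act n α β γ δ f).eval w = (γ * w + δ) ^ n * f.eval ((α * w + β) / (γ * w + δ)) := by
  rw [Polynomial.eval_eq_sum_range' (Nat.lt_succ_of_le hf), act, Polynomial.eval_finsetSum,
    Finset.mul_sum]
  refine Finset.sum_congr rfl fun k hk => ?_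
  have hk' : k ≤ n := Nat.lt_succ_iff.mp (Finset.mem_range.mp hk)
  have hp : (γ * w + δ) ^ n = (γ * w + δ) ^ k * (γ * w + δ) ^ (n - k) := by
    rw [← pow_add, Nat.add_sub_cancel' hk']
  simp only [eval_mul, eval_pow, eval_add, eval_C, eval_X]
  have hwk : (γ * w + δ) ^ k ≠ 0 := pow_ne_zero _ hw
  rw [hp, div_pow]
  linear_combination -(γ * w + δ) ^ (n - k) * f.coeff k * mul_div_cancel₀ ((α * w + β) ^ k) hwk

lemma natDegree_act_le (n : ℕ) (α β γ δ : ℂ) (f : ℂ[X]) :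
    (act n α β γ δ f).natDegree ≤ n := by
  refine Polynomial.natDegree_sum_le_of_forall_le _ _ fun k hk => ?_
  have hk' : k ≤ n := Nat.lt_succ_iff.mp (Finset.mem_range.mp hk)
  have h1 : ((C α * X + C β) ^ k).natDegree ≤ k :=
    (natDegree_pow_le_of_le k natDegree_linear_le).trans (by simp)
  have h2 : ((C γ * X + C δ) ^ (n - k)).natDegree ≤ n - k :=
    (natDegree_pow_le_of_le (n - k) natDegree_linear_le).trans (by simp)
  refine (natDegree_mul_le_of_le (natDegree_mul_le_of_le (natDegree_C _).le h1) h2).trans ?_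
  omega

lemma eq_of_eval_eq_off_pole {γ δ : ℂ} (hne : γ ≠ 0 ∨ δ ≠ 0) {p q : ℂ[X]}
    (h : ∀ w : ℂ, γ * w + δ ≠ 0 → p.eval w = q.eval w) : p = q := by
  refine Polynomial.eq_of_infinite_eval_eq p q (Set.Infinite.mono
    (s := {w : ℂ | γ * w + δ ≠ 0}) h ?_)
  have hfin : {w : ℂ | γ * w + δ = 0}.Finite := by
    refine Set.Subsingleton.finite fun x hx y hy => ?_
    simp only [Set.mem_ofPred_eq] at hx hy
    rcases eq_or_ne γ 0 with h0 | h0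
    · subst h0
      simp at hx hne
      exact absurd hx hne
    · exact mul_left_cancel₀ h0 (add_right_cancel (hx.trans hy.symm))
  exact hfin.infinite_compl

lemma lower_row_ne_zero {α β γ δ : ℂ} (h : α * δ - β * γ = 1) : γ ≠ 0 ∨ δ ≠ 0 := by
  by_contra! hc
  simp [hc.1, hc.2] at h

lemma act_act_inv {n : ℕ} {α β γ δ : ℂ} (h : α * δ - β * γ = 1) {g : ℂ[X]}
    (hg : g.natDegree ≤ n) : act n α β γ δ (act n δ (-β) (-γ) α g) = g := by
  refine eq_of_eval_eq_off_pole (lower_row_ne_zero h) fun w hw => ?_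
  have e : -γ * ((α * w + β) / (γ * w + δ)) + α = 1 / (γ * w + δ) := by
    field_simp
    linear_combination h
  have e2 : (δ * ((α * w + β) / (γ * w + δ)) + -β) / (1 / (γ * w + δ)) = w := by
    rw [div_div_eq_mul_div, div_one, add_mul, mul_assoc δ, div_mul_cancel₀ _ hw]
    linear_combination w * h
  rw [eval_act (natDegree_act_le _ _ _ _ _ _) hw,
    eval_act hg (by rw [e]; exact one_div_ne_zero hw), e, e2, ← mul_assoc, ← mul_pow,
    mul_one_div_cancel hw, one_pow, one_mul]

lemma mem_En_iff {n : ℕ} {f : ℂ[X]} : f ∈ En n ↔ f.natDegree ≤ n ∧ f.coeff 1 = 0 := by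
  constructor
  · intro hf
    refine Submodule.span_induction (p := fun f _ => f.natDegree ≤ n ∧ f.coeff 1 = 0)
      ?_ ?_ ?_ ?_ hf
    · rintro _ ⟨k, hk, rfl⟩
      have : k ≤ n ∧ 1 ≠ k := by
        rcases hk with hk | hk
        · simp only [Set.mem_singleton_iff] at hk
          omega
        · simp only [Set.mem_Icc] at hk
          omega
      exact ⟨by simpa using this.1, by simp [coeff_X_pow, this.2]⟩
    · simp
    · intro x y _ _ hx hy
      exact ⟨natDegree_add_le_of_degree_le hx.1 hy.1, by simp [hx.2, hy.2]⟩
    · intro c x _ hx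
      exact ⟨(natDegree_smul_le c x).trans hx.1, by simp [hx.2]⟩
  · rintro ⟨hd, h1⟩
    rw [Polynomial.as_sum_range_C_mul_X_pow' f (Nat.lt_succ_of_le hd)]
    refine Submodule.sum_mem _ fun k hk => ?_
    rw [← smul_eq_C_mul]
    by_cases hk1 : k = 1
    · simp [hk1, h1]
    · refine Submodule.smul_mem _ _ (Submodule.subset_span ⟨k, ?_, rfl⟩)
      have := Finset.mem_range.mp hk
      simp only [Set.mem_union, Set.mem_singleton_iff, Set.mem_Icc]
      omega

lemma mem_EhatN_iff {m : ℕ} {a : ℂ} {f : ℂ[X]} :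
    f ∈ EhatN (m + 2) a ↔
      f.natDegree ≤ m + 2 ∧ f.coeff (m + 1) + a * f.coeff (m + 2) = 0 := by
  constructor
  · intro hf
    refine Submodule.span_induction
      (p := fun f _ => f.natDegree ≤ m + 2 ∧ f.coeff (m + 1) + a * f.coeff (m + 2) = 0)
      ?_ ?_ ?_ ?_ hf
    · rintro _ (hk | ⟨k, hk, rfl⟩)
      · rw [Set.mem_singleton_iff.mp hk]
        refine ⟨?_, by simp [coeff_X_pow]⟩
        exact (natDegree_sub_le _ _).trans (max_le (natDegree_X_pow_le _)
          ((natDegree_C_mul_X_pow_le _ _).trans (by omega)))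
      · have hk' : k ≤ m := hk
        refine ⟨(natDegree_X_pow_le k).trans (by omega), ?_⟩
        simp [coeff_X_pow, show m + 1 ≠ k by omega, show m + 2 ≠ k by omega]
    · simp
    · intro x y _ _ hx hy
      refine ⟨natDegree_add_le_of_degree_le hx.1 hy.1, ?_⟩
      simp only [coeff_add]
      linear_combination hx.2 + hy.2
    · intro c x _ hx
      refine ⟨(natDegree_smul_le c x).trans hx.1, ?_⟩
      simp only [coeff_smul, smul_eq_mul]
      linear_combination c * hx.2
  · rintro ⟨hd, h1⟩
    have h1' : f.coeff (m + 1) = -(f.coeff (m + 2) * a) := by linear_combination h1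
    have key : f = (∑ k ∈ Finset.range (m + 1), f.coeff k • (X : ℂ[X]) ^ k)
        + f.coeff (m + 2) • ((X : ℂ[X]) ^ (m + 2) - C a * X ^ (m + 2 - 1)) := by
      conv_lhs => rw [Polynomial.as_sum_range_C_mul_X_pow' f (Nat.lt_succ_of_le hd)]
      rw [Finset.sum_range_succ, Finset.sum_range_succ, h1']
      simp only [smul_eq_C_mul, C_neg, C_mul, show m + 2 - 1 = m + 1 from rfl]
      ring
    rw [key]
    refine Submodule.add_mem _ (Submodule.sum_mem _ fun k hk => ?_) ?_
    · refine Submodule.smul_mem _ _ (Submodule.subset_span (Or.inr ⟨k, ?_, rfl⟩))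
      exact Nat.lt_succ_iff.mp (Finset.mem_range.mp hk)
    · exact Submodule.smul_mem _ _ (Submodule.subset_span (Or.inl rfl))

/-- Splits off the terms `k = 0` and `k = 1`; the rest is the action on the polynomial with
coefficients `fₖ₊₂`, which is `divX (divX f)`. -/
lemma act_split (m : ℕ) (α β γ δ : ℂ) (f : ℂ[X]) :
    act (m + 2) α β γ δ f =
      (C α * X + C β) ^ 2 * act m α β γ δ (divX (divX f))
      + C (f.coeff 1) * (C α * X + C β) * (C γ * X + C δ) ^ (m + 1)
      + C (f.coeff 0) * (C γ * X + C δ) ^ (m + 2) := by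
  have hsum : ∑ k ∈ Finset.range (m + 1), C (f.coeff (k + 1 + 1)) * (C α * X + C β) ^ (k + 1 + 1)
        * (C γ * X + C δ) ^ (m + 2 - (k + 1 + 1))
      = (C α * X + C β) ^ 2 * act m α β γ δ (divX (divX f)) := by
    rw [act, Finset.mul_sum]
    refine Finset.sum_congr rfl fun k _ => ?_
    rw [coeff_divX, coeff_divX, show m + 2 - (k + 1 + 1) = m - k by omega]
    ring
  rw [← hsum]
  unfold act
  rw [Finset.sum_range_succ', Finset.sum_range_succ', zero_add, pow_zero, pow_one, mul_one,
    Nat.sub_zero, show m + 2 - 1 = m + 1 from rfl]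

lemma act_functional_ne_zero (m : ℕ) {α β γ δ : ℂ} (h : α * δ - β * γ = 1) (hα : α ≠ 0)
    (f : ℂ[X]) :
    α ^ m * ((derivative (act (m + 2) α β γ δ f)).eval (-β / α)
      + -((m + 2 : ℕ) : ℂ) * α * γ * (act (m + 2) α β γ δ f).eval (-β / α)) = f.coeff 1 := by
  have hA : α * (-β / α) + β = 0 := by field_simp; ring
  have hB : γ * (-β / α) + δ = 1 / α := by field_simp; linear_combination h
  rw [act_split]
  simp only [derivative_add, derivative_mul, derivative_pow, derivative_C, derivative_X,
    eval_add, eval_mul, eval_pow, eval_C, eval_X, hA, hB]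
  simp
  field_simp
  ring

lemma act_functional_zero (m : ℕ) {β γ δ : ℂ} (h : -(β * γ) = 1) (f : ℂ[X]) :
    (act (m + 2) 0 β γ δ f).coeff (m + 1)
      + -((m + 2 : ℕ) : ℂ) * δ / γ * (act (m + 2) 0 β γ δ f).coeff (m + 2)
      = -γ ^ m * f.coeff 1 := by
  have hγ : γ ≠ 0 := by rintro rfl; simp at h
  have hB : (C γ * X + C δ : ℂ[X]) = C γ * (X + C (δ / γ)) := by
    rw [mul_add, ← C_mul, mul_div_cancel₀ _ hγ]
  have e : act (m + 2) 0 β γ δ f = C (β ^ 2) * act m 0 β γ δ (divX (divX f))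
      + C (f.coeff 1 * β * γ ^ (m + 1)) * (X + C (δ / γ)) ^ (m + 1)
      + C (f.coeff 0 * γ ^ (m + 2)) * (X + C (δ / γ)) ^ (m + 2) := by
    rw [act_split, hB]
    simp only [C_0, zero_mul, zero_add, mul_pow, C_mul, C_pow]
    ring
  have hlow : ∀ j, m < j → (act m 0 β γ δ (divX (divX f))).coeff j = 0 := fun j hj =>
    coeff_eq_zero_of_natDegree_lt ((natDegree_act_le _ _ _ _ _ _).trans_lt hj)
  have hc : (m + 2).choose (m + 1) = m + 2 := Nat.choose_succ_self_right (m + 1)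
  simp only [e, coeff_add, coeff_C_mul, hlow (m + 1) (by omega), hlow (m + 2) (by omega),
    coeff_X_add_C_pow, hc, Nat.choose_self, Nat.choose_succ_self, Nat.sub_self,
    show m + 2 - (m + 1) = 1 by omega]
  push_cast
  field_simp
  linear_combination (-f.coeff 1 * γ ^ (m + 1)) * h

/-- The set in the theorem is the image of `ℰₙ` under `act`; bijectivity of `act` on `𝒫ₙ` lets a
membership condition on `act f` proportional to `f₁` characterise it. -/
lemma mobius_image_iff {n : ℕ} {α β γ δ : ℂ} (h : α * δ - β * γ = 1) {L : ℂ[X] → Prop}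
    (hL : ∀ f : ℂ[X], L (act n α β γ δ f) ↔ f.coeff 1 = 0) (g : ℂ[X]) :
    (∃ f ∈ En n, ∀ w : ℂ, γ * w + δ ≠ 0 →
      g.eval w = (γ * w + δ) ^ n * f.eval ((α * w + β) / (γ * w + δ)))
      ↔ g.natDegree ≤ n ∧ L g := by
  constructor
  · rintro ⟨f, hf, hw⟩
    obtain ⟨hd, h1⟩ := mem_En_iff.mp hf
    have hg : g = act n α β γ δ f :=
      eq_of_eval_eq_off_pole (lower_row_ne_zero h) fun w h0 => by rw [hw w h0, eval_act hd h0]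
    rw [hg]
    exact ⟨natDegree_act_le _ _ _ _ _ _, (hL f).mpr h1⟩
  · rintro ⟨hd, h1⟩
    have hg := act_act_inv h hd
    refine ⟨act n δ (-β) (-γ) α g, mem_En_iff.mpr ⟨natDegree_act_le _ _ _ _ _ _, ?_⟩, ?_⟩
    · rw [← hL, hg]
      exact h1
    · intro w h0
      rw [← eval_act (natDegree_act_le _ _ _ _ _ _) h0, hg]

/-- the image of `ℰₙ` under the `SL₂` action `f ↦ (γw+δ)ⁿ·f(ζ(w))`,
`ζ(w) = (αw+β)/(γw+δ)`, is `ℰ^{a,b}ₙ` with `a = −nαγ`, `b = −β/α` when `α ≠ 0`, and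
is `Êₙᵃ` with `a = −nδ/γ` when `α = 0`. -/
theorem stmt8 (n : ℕ) (hn : 2 ≤ n) (α β γ δ : ℂ) (h : α * δ - β * γ = 1) :
    (α ≠ 0 →
      {h' : Polynomial ℂ | ∃ f ∈ En n, ∀ w : ℂ, γ * w + δ ≠ 0 →
          h'.eval w = (γ * w + δ) ^ n * f.eval ((α * w + β) / (γ * w + δ))} =
        EabN (-(n : ℂ) * α * γ) (-β / α) n) ∧
    (α = 0 →
      {h' : Polynomial ℂ | ∃ f ∈ En n, ∀ w : ℂ, γ * w + δ ≠ 0 →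
          h'.eval w = (γ * w + δ) ^ n * f.eval ((α * w + β) / (γ * w + δ))} =
        EhatN n (-(n : ℂ) * δ / γ)) := by
  obtain ⟨m, rfl⟩ : ∃ m, n = m + 2 := ⟨n - 2, by omega⟩
  constructor
  · intro hα
    ext g
    rw [Set.mem_ofPred_eq, mobius_image_iff h
      (L := fun g => g ∈ Eab (-((m + 2 : ℕ) : ℂ) * α * γ) (-β / α)) fun f => ?_]
    · rw [EabN, Set.mem_inter_iff, and_comm, natDegree_le_iff_degree_le]
      rfl
    · rw [← act_functional_ne_zero m h hα f, mul_eq_zero, or_iff_right (pow_ne_zero _ hα)]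
      rfl
  · rintro rfl
    have hβγ : -(β * γ) = 1 := by linear_combination h
    have hγ : γ ≠ 0 := by rintro rfl; simp at hβγ
    ext g
    rw [Set.mem_ofPred_eq, mem_EhatN_iff, mobius_image_iff h
      (L := fun g => g.coeff (m + 1) + -((m + 2 : ℕ) : ℂ) * δ / γ * g.coeff (m + 2) = 0)]
    intro f
    rw [act_functional_zero m hβγ f, mul_eq_zero,
      or_iff_right (neg_ne_zero.mpr (pow_ne_zero _ hγ))]
end
end

section
/- Let n ≥ 2 and a, b ∈ ℂ. If b ≠ 0, then { f* : f ∈ ℰ^{a,b}ₙ } = ℰ^{â,b̂}ₙ, where â = b·(n + a·b) and b̂ = −1/b. If b = 0, then { f* : f ∈ ℰ^{a,0}ₙ } = Êₙ^{−a}. -/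
/-!
On polynomials of degree at most `n` the map `f ↦ f*` is an involution up to the sign `(-1)ⁿ`
(`fstar_fstar`), hence a bijection of `𝒫ₙ`. An equality `{f* : f ∈ A} = B` between subsets of `𝒫ₙ`
therefore amounts to `f ∈ A ↔ f* ∈ B` for all `f ∈ 𝒫ₙ` when `A` and `B` are stable
under constant multiples (`image_fstar_eq`).

For `b ≠ 0`, differentiating `f*(u) = uⁿ f(-1/u)` at `u = b̂ = -1/b` gives
`(f*)'(b̂) + â f*(b̂) = b̂ⁿ⁻² (f'(b) + a f(b))` (`fstar_functional`), so the two defining functionals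
vanish together. For `b = 0`, the condition reads `c₁ + a c₀ = 0`, and `c₀`, `-c₁` are the
coefficients of `uⁿ`, `uⁿ⁻¹` in `f*`; the space `Êₙ^{-a}` is exactly the set of polynomials in `𝒫ₙ`
with `coeff (n-1) = a * coeff n` (`mem_EhatN`).
-/

open Polynomial

noncomputable section

/-- The inversion `f* = Σₖ cₖ·(−1)ᵏ·u^{n−k}` of a polynomial `f = Σₖ cₖ·zᵏ` of degree
at most `n`, so that `f*(u) = uⁿ·f(−1/u)`. -/
def fstar (n : ℕ) (f : Polynomial ℂ) : Polynomial ℂ :=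
  ∑ k ∈ Finset.range (n + 1), C ((-1) ^ k * f.coeff k) * X ^ (n - k)

lemma coeff_fstar (n : ℕ) (f : Polynomial ℂ) (j : ℕ) :
    (fstar n f).coeff j = if j ≤ n then (-1) ^ (n - j) * f.coeff (n - j) else 0 := by
  unfold fstar
  simp only [finsetSum_coeff, coeff_C_mul, coeff_X_pow, mul_ite, mul_one, mul_zero]
  split_ifs with h
  · rw [Finset.sum_eq_single (n - j)]
    · rw [if_pos (by omega)]
    · intro k hk hkj
      rw [Finset.mem_range] at hk
      rw [if_neg (by omega)]
    · intro hk
      exact absurd (Finset.mem_range.2 (by omega)) hk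
  · refine Finset.sum_eq_zero fun k _ => ?_
    rw [if_neg (by omega)]

lemma mem_Pn_iff (n : ℕ) (f : Polynomial ℂ) : f ∈ Pn n ↔ ∀ j, n < j → f.coeff j = 0 := by
  have h := degree_le_iff_coeff_zero f (n : WithBot ℕ)
  simp only [Nat.cast_lt] at h
  exact h

lemma fstar_mem_Pn (n : ℕ) (f : Polynomial ℂ) : fstar n f ∈ Pn n := by
  rw [mem_Pn_iff]
  intro j hj
  rw [coeff_fstar, if_neg (by omega)]

lemma fstar_C_mul (n : ℕ) (c : ℂ) (f : Polynomial ℂ) :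
    fstar n (C c * f) = C c * fstar n f := by
  ext j
  simp only [coeff_fstar, coeff_C_mul]
  split_ifs
  · ring
  · simp

lemma fstar_fstar (n : ℕ) (f : Polynomial ℂ) (hf : f ∈ Pn n) :
    fstar n (fstar n f) = C ((-1) ^ n) * f := by
  ext j
  simp only [coeff_fstar, coeff_C_mul]
  split_ifs with h h'
  · have hn : n = (n - j) + j := by omega
    rw [show n - (n - j) = j by omega, ← mul_assoc, ← pow_add, ← hn]
  · omega
  · rw [(mem_Pn_iff n f).1 hf j (by omega), mul_zero]

/-- Since `f ↦ f*` is a bijection of `𝒫ₙ`, an image under it is identified by a membership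
criterion; the closure hypotheses on `A` and `B` absorb the sign `(-1)ⁿ` of the inverse map. -/
lemma image_fstar_eq (n : ℕ) (A B : Set (Polynomial ℂ)) (hA : A ⊆ Pn n) (hB : B ⊆ Pn n)
    (hCA : ∀ c : ℂ, ∀ f ∈ A, C c * f ∈ A)
    (h : ∀ f ∈ Pn n, (f ∈ A ↔ fstar n f ∈ B))
    (hCB : ∀ c : ℂ, ∀ f ∈ B, C c * f ∈ B) :
    fstar n '' A = B := by
  ext g
  constructor
  · rintro ⟨f, hf, rfl⟩
    exact (h f (hA hf)).1 hf
  · intro hg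
    refine ⟨C ((-1) ^ n) * fstar n g, hCA _ _ ?_, ?_⟩
    · rw [h _ (fstar_mem_Pn n g), fstar_fstar n g (hB hg)]
      exact hCB _ _ hg
    · rw [fstar_C_mul, fstar_fstar n g (hB hg), ← mul_assoc, ← C_mul, ← pow_add,
        Even.neg_one_pow ⟨n, rfl⟩, C_1, one_mul]

lemma EabN_C_mul (n : ℕ) (a b c : ℂ) (f : Polynomial ℂ) (hf : f ∈ EabN a b n) :
    C c * f ∈ EabN a b n := by
  obtain ⟨h1, h2⟩ := hf
  refine ⟨?_, ?_⟩
  · simp only [Eab, Set.mem_ofPred_eq] at h1 ⊢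
    simp only [derivative_C_mul, eval_mul, eval_C]
    linear_combination c * h1
  · rw [mem_Pn_iff] at h2 ⊢
    intro j hj
    rw [coeff_C_mul, h2 j hj, mul_zero]

/-- The case `f = z^k` of `fstar_functional`, where `f* = (-1)^k u^{n-k}`. -/
lemma monomial_functional (n k : ℕ) (hn : 2 ≤ n) (hk : k ≤ n) (a b : ℂ) (hb : b ≠ 0) :
    (-1 : ℂ) ^ k * (((n - k : ℕ) : ℂ) * (-1 / b) ^ (n - k - 1)
        + b * ((n : ℂ) + a * b) * (-1 / b) ^ (n - k))
      = (-1 / b) ^ (n - 2) * ((k : ℂ) * b ^ (k - 1) + a * b ^ k) := by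
  obtain ⟨u, hu⟩ : ∃ u : ℂ, u = -1 / b := ⟨_, rfl⟩
  have hub : u * b = -1 := by rw [hu]; field_simp
  have hu0 : u ≠ 0 := by rintro rfl; simp at hub
  rw [← hu]
  obtain ⟨m, rfl⟩ := Nat.exists_eq_add_of_le hk
  rw [show k + m - k = m by omega]
  -- After multiplication by `u ^ 2 * b`, the truncated exponents `m - 1`, `k - 1` and
  -- `k + m - 2` disappear.
  have e1 : (m : ℂ) * u ^ (m - 1) * u = m * u ^ m := by
    rcases m with _ | m
    · simp
    · simp [pow_succ, mul_assoc]
  have e2 : (k : ℂ) * b ^ (k - 1) * b = k * b ^ k := by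
    rcases k with _ | k
    · simp
    · simp [pow_succ, mul_assoc]
  have e3 : u ^ (k + m - 2) * u ^ 2 = u ^ (k + m) := by
    rw [← pow_add]; congr 1; omega
  have e4 : u ^ (k + m) * b ^ k = u ^ m * (-1) ^ k := by
    rw [pow_add, ← hub, mul_pow]; ring
  have hbu : u ^ 2 * b ≠ 0 := mul_ne_zero (pow_ne_zero 2 hu0) hb
  apply mul_right_cancel₀ hbu
  have lhs : (-1 : ℂ) ^ k * ((m : ℂ) * u ^ (m - 1)
        + b * (((k + m : ℕ) : ℂ) + a * b) * u ^ m) * (u ^ 2 * b)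
      = (-1 : ℂ) ^ k * u ^ m * (k + a * b) := by
    push_cast
    linear_combination (-1 : ℂ) ^ k * (u * b) * e1
      + (-1 : ℂ) ^ k * u ^ m * (m + (k + m + a * b) * (u * b - 1)) * hub
  rw [lhs]
  linear_combination (-(k : ℂ) * b ^ k - a * b ^ k * b) * e3 + (-(k : ℂ) - a * b) * e4
    - u ^ (k + m - 2) * u ^ 2 * e2

/-- The functional defining `ℰ^{â,b̂}` at `f*` is a nonzero multiple of the one defining
`ℰ^{a,b}` at `f`. -/
lemma fstar_functional (n : ℕ) (hn : 2 ≤ n) (a b : ℂ) (hb : b ≠ 0)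
    (f : Polynomial ℂ) (hf : f ∈ Pn n) :
    (derivative (fstar n f)).eval (-1 / b)
        + b * ((n : ℂ) + a * b) * (fstar n f).eval (-1 / b)
      = (-1 / b) ^ (n - 2) * ((derivative f).eval b + a * f.eval b) := by
  have hfs : f = ∑ k ∈ Finset.range (n + 1), C (f.coeff k) * X ^ k :=
    f.as_sum_range_C_mul_X_pow' (Nat.lt_succ_of_le (natDegree_le_of_degree_le hf))
  have hd : (derivative f).eval b + a * f.eval b
      = ∑ k ∈ Finset.range (n + 1), f.coeff k * ((k : ℂ) * b ^ (k - 1) + a * b ^ k) := by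
    conv_lhs => rw [hfs]
    simp only [derivative_sum, eval_finsetSum, derivative_C_mul, derivative_X_pow, eval_mul,
      eval_C, eval_pow, eval_X, Finset.mul_sum, ← Finset.sum_add_distrib]
    exact Finset.sum_congr rfl fun k _ => by ring
  rw [hd, Finset.mul_sum]
  unfold fstar
  simp only [derivative_sum, eval_finsetSum, derivative_C_mul, derivative_X_pow, eval_mul,
    eval_C, eval_pow, eval_X, Finset.mul_sum, ← Finset.sum_add_distrib]
  refine Finset.sum_congr rfl fun k hk => ?_
  have := monomial_functional n k hn (Nat.lt_succ_iff.1 (Finset.mem_range.1 hk)) a b hb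
  linear_combination f.coeff k * this

/-- `Êₙᵃ` is cut out of `𝒫ₙ` by one linear condition on the two leading coefficients. -/
lemma mem_EhatN (n : ℕ) (hn : 2 ≤ n) (a : ℂ) (g : Polynomial ℂ) :
    g ∈ EhatN n a ↔ g ∈ Pn n ∧ g.coeff (n - 1) = -a * g.coeff n := by
  rw [mem_Pn_iff]
  constructor
  · intro hg
    induction hg using Submodule.span_induction with
    | mem x hx =>
      rcases hx with hx | ⟨k, hk, rfl⟩
      · rw [Set.mem_singleton_iff] at hx
        subst hx
        refine ⟨fun j hj => ?_, ?_⟩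
        · simp only [coeff_sub, coeff_C_mul, coeff_X_pow]
          rw [if_neg (by omega), if_neg (by omega)]
          simp
        · simp only [coeff_sub, coeff_C_mul, coeff_X_pow]
          rw [if_neg (show ¬ n - 1 = n by omega), if_neg (show ¬ n = n - 1 by omega)]
          simp
      · rw [Set.mem_Iic] at hk
        refine ⟨fun j hj => ?_, ?_⟩
        · simp only [coeff_X_pow]
          rw [if_neg (by omega)]
        · simp only [coeff_X_pow]
          rw [if_neg (by omega), if_neg (by omega), mul_zero]
    | zero => simp
    | add x y _ _ hx hy =>
      refine ⟨fun j hj => ?_, ?_⟩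
      · rw [coeff_add, hx.1 j hj, hy.1 j hj, add_zero]
      · rw [coeff_add, coeff_add, hx.2, hy.2, mul_add]
    | smul c x _ hx =>
      refine ⟨fun j hj => ?_, ?_⟩
      · rw [coeff_smul, hx.1 j hj, smul_zero]
      · rw [coeff_smul, coeff_smul, hx.2, smul_eq_mul, smul_eq_mul]
        ring
  · rintro ⟨hdeg, hc⟩
    have hgs : g = ∑ k ∈ Finset.range (n + 1), C (g.coeff k) * X ^ k :=
      g.as_sum_range_C_mul_X_pow'
        (Nat.lt_succ_of_le (natDegree_le_of_degree_le ((mem_Pn_iff n g).2 hdeg)))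
    have hsplit : g = ∑ k ∈ Finset.range (n - 1), g.coeff k • (X : Polynomial ℂ) ^ k
        + g.coeff n • (X ^ n - C a * X ^ (n - 1)) := by
      conv_lhs => rw [hgs]
      obtain ⟨m, rfl⟩ : ∃ m, n = m + 1 := ⟨n - 1, by omega⟩
      rw [Nat.add_sub_cancel] at hc ⊢
      rw [Finset.sum_range_succ, Finset.sum_range_succ, hc]
      simp only [smul_eq_C_mul, C_mul, C_neg]
      ring
    rw [hsplit]
    unfold EhatN
    refine Submodule.add_mem _ (Submodule.sum_mem _ fun k hk => ?_) ?_
    · rw [Finset.mem_range] at hk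
      exact Submodule.smul_mem _ _ (Submodule.subset_span
        (Or.inr ⟨k, Set.mem_Iic.2 (by omega), rfl⟩))
    · exact Submodule.smul_mem _ _ (Submodule.subset_span (Or.inl rfl))

/-- for `n ≥ 2`: if `b ≠ 0` then `{f* : f ∈ ℰ^{a,b}ₙ} = ℰ^{â,b̂}ₙ` with
`â = b(n+ab)`, `b̂ = −1/b`; if `b = 0` then `{f* : f ∈ ℰ^{a,0}ₙ} = Êₙ^{−a}`. -/
theorem stmt9 (n : ℕ) (hn : 2 ≤ n) (a b : ℂ) :
    (b ≠ 0 → fstar n '' EabN a b n = EabN (b * ((n : ℂ) + a * b)) (-1 / b) n) ∧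
    (b = 0 → fstar n '' EabN a 0 n = EhatN n (-a)) := by
  refine ⟨fun hb => ?_, fun _ => ?_⟩
  · refine image_fstar_eq n _ _ (fun f hf => hf.2) (fun f hf => hf.2)
      (fun c f hf => EabN_C_mul n _ _ c f hf) (fun f hf => ?_)
      (fun c f hf => EabN_C_mul n _ _ c f hf)
    have hne : (-1 / b) ^ (n - 2) ≠ 0 :=
      pow_ne_zero _ (div_ne_zero (neg_ne_zero.2 one_ne_zero) hb)
    simp only [EabN, Eab, Set.mem_inter_iff, Set.mem_ofPred_eq, hf, fstar_mem_Pn, and_true]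
    rw [fstar_functional n hn a b hb f hf, mul_eq_zero, or_iff_right hne]
  · refine image_fstar_eq n _ _ (fun f hf => hf.2)
      (fun f hf => ((mem_EhatN n hn _ f).1 hf).1)
      (fun c f hf => EabN_C_mul n _ _ c f hf) (fun f hf => ?_) (fun c f hf => ?_)
    · rw [mem_EhatN n hn]
      simp only [EabN, Eab, Set.mem_inter_iff, Set.mem_ofPred_eq, hf, fstar_mem_Pn, and_true,
        true_and]
      rw [coeff_fstar, coeff_fstar, if_pos (Nat.sub_le n 1), if_pos le_rfl,
        show n - (n - 1) = 1 by omega, Nat.sub_self, ← coeff_zero_eq_eval_zero,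
        ← coeff_zero_eq_eval_zero, coeff_derivative]
      norm_num
      constructor
      · intro h
        linear_combination -h
      · intro h
        linear_combination -h
    · rw [← smul_eq_C_mul]
      exact Submodule.smul_mem _ c hf
end
end

section
/- Let a, b ∈ ℂ and let T be a second order operator with components p, q, r defined on ℂ∖{b}. Then T preserves ℰ^{a,b} if and only if p agrees with a polynomial and there exist polynomials q₀, r₀ ∈ ℂ[z] such that q(z) = q₀(z) + p′(z) − 2p(z)/(z−b), r(z) = r₀(z) − 2a·p(z)/(z−b), q₀(b) = 2a·p(b), and r₀′(b) = a·q₀′(b) + a·p″(b) − a²·p′(b). -/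
/-!
Write `t = z - b`.  The space `ℰ^{a,b}` is spanned by `1 - a t` and the `t ^ k`, `k ≥ 2`.

If `T` preserves it, let `g₀, g₂, g₃, g₄, g₅ ∈ ℰ^{a,b}` be the images of
`1 - a t, t², t³, t⁴, t⁵`.  Eliminating `p, q, r` gives two polynomial identities, namely
`g₅ - 3 t g₄ + 3 t² g₃ - t³ g₂ = 0` and one expressing `t⁴ g₀` through `g₂, g₃, g₄`.
An element of `ℰ^{a,b}` that vanishes at `b` is divisible by `t²` (`exists_sq_mul_of_mem_Eab`),
so the first identity forces `t² ∣ g₅` and `t² ∣ g₄`, and the second one then forces `t² ∣ g₃`.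
Solving for `p, q, r` shows that `p` is a polynomial and that `q, r` have at most a simple pole
at `b`, with residues `-2 p(b)` and `-2 a p(b)`.  The two remaining conditions are
`g₂ ∈ ℰ^{a,b}` and `g₀ ∈ ℰ^{a,b}`.

Conversely, if `f ∈ ℰ^{a,b}` then `f' + a f = t u` for a polynomial `u`, the singular part of
`T[f]` is `-2 p (f' + a f) / t = -2 p u`, and the two conditions at `b` are what is needed for
the resulting polynomial to lie in `ℰ^{a,b}`.
-/

open Polynomial

noncomputable section

theorem poly_eq_of_eval_off (b : ℂ) {f g : Polynomial ℂ}
    (h : ∀ z : ℂ, z ≠ b → f.eval z = g.eval z) : f = g := by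
  refine Polynomial.eq_of_infinite_eval_eq f g ?_
  refine Set.Infinite.mono (s := ({b} : Set ℂ)ᶜ) (fun z hz => h z hz) ?_
  exact (Set.finite_singleton b).infinite_compl

theorem exists_mul_of_eval_eq_zero {b : ℂ} {f : Polynomial ℂ} (h : f.eval b = 0) :
    ∃ u, f = (X - C b) * u :=
  Polynomial.dvd_iff_isRoot.mpr h

theorem exists_sq_mul_of_mem_Eab {a b : ℂ} {g : Polynomial ℂ} (hg : g ∈ Eab a b)
    (h : g.eval b = 0) : ∃ u, g = (X - C b) ^ 2 * u := by
  obtain ⟨v, rfl⟩ := exists_mul_of_eval_eq_zero h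
  have hv : v.eval b = 0 := by simpa [Eab, derivative_mul] using hg
  obtain ⟨u, rfl⟩ := exists_mul_of_eval_eq_zero hv
  exact ⟨u, by ring⟩

/-- The sufficiency direction: the pole of `T[f]` at `b` cancels against `f' + a f`. -/
theorem SOPreserves_Eab_of_form {a b : ℂ} {p q r : ℂ → ℂ} {P q0 r0 : Polynomial ℂ}
    (hp : ∀ z : ℂ, z ≠ b → p z = P.eval z)
    (hq : ∀ z : ℂ, z ≠ b →
      q z = q0.eval z + (derivative P).eval z - 2 * P.eval z / (z - b))
    (hr : ∀ z : ℂ, z ≠ b → r z = r0.eval z - 2 * a * P.eval z / (z - b))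
    (hq0 : q0.eval b = 2 * a * P.eval b)
    (hr0 : (derivative r0).eval b = a * (derivative q0).eval b
      + a * (derivative (derivative P)).eval b - a ^ 2 * (derivative P).eval b) :
    SOPreserves p q r {z : ℂ | z ≠ b} (Eab a b) := by
  intro f hf
  have hf' : (derivative f).eval b + a * f.eval b = 0 := hf
  obtain ⟨u, hu⟩ : ∃ u, derivative f + C a * f = (X - C b) * u :=
    exists_mul_of_eval_eq_zero (by simpa using hf')
  -- the value at `b` of the first and second derivatives of `f' + a f = t u`
  have hu1 : (derivative (derivative f)).eval b + a * (derivative f).eval b = u.eval b := by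
    simpa [derivative_mul] using congrArg (fun w => (derivative w).eval b) hu
  have hu2 : (derivative (derivative (derivative f))).eval b
      + a * (derivative (derivative f)).eval b = 2 * (derivative u).eval b := by
    have := congrArg (fun w => (derivative (derivative w)).eval b) hu
    simp [derivative_mul] at this
    linear_combination this
  refine ⟨P * derivative (derivative f) + (q0 + derivative P) * derivative f + r0 * f
    - 2 * P * u, ?_, ?_⟩
  · simp only [Eab, Set.mem_ofPred_eq, derivative_add, derivative_sub, derivative_mul, eval_add,
      eval_sub, eval_mul, derivative_ofNat, eval_ofNat, zero_mul, zero_add]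
    linear_combination P.eval b * hu2 + (2 * (derivative P).eval b + q0.eval b) * hu1
      + u.eval b * hq0 + f.eval b * hr0
      + ((derivative q0).eval b + (derivative (derivative P)).eval b
        - a * (derivative P).eval b + r0.eval b) * hf'
  · intro z hz
    have hz' : z - b ≠ 0 := sub_ne_zero.mpr hz
    have hu' : (derivative f).eval z + a * f.eval z = (z - b) * u.eval z := by
      simpa using congrArg (eval z) hu
    simp only [SOApply, hp z hz, hq z hz, hr z hz, eval_add, eval_sub, eval_mul, eval_ofNat]
    field_simp
    linear_combination (-2 * P.eval z) * hu'

/-- The image of `(z - b) ^ (k + 2)` under an operator preserving `ℰ^{a,b}`. -/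
theorem exists_image_pow {a b : ℂ} {p q r : ℂ → ℂ}
    (h : SOPreserves p q r {z : ℂ | z ≠ b} (Eab a b)) (k : ℕ) :
    ∃ g ∈ Eab a b, ∀ z : ℂ, z ≠ b →
      p z * ((k + 2) * (k + 1) * (z - b) ^ k) + q z * ((k + 2) * (z - b) ^ (k + 1))
        + r z * (z - b) ^ (k + 2) = g.eval z := by
  obtain ⟨g, hg, hgz⟩ := h ((X - C b) ^ (k + 2)) (by simp [Eab, derivative_X_sub_C_pow])
  refine ⟨g, hg, fun z hz => ?_⟩
  rw [← hgz z hz]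
  simp only [SOApply, derivative_X_sub_C_pow, derivative_mul, derivative_C,
    Nat.add_sub_cancel, show k + 2 - 1 = k + 1 from rfl, eval_mul, eval_add, eval_sub, eval_X,
    eval_C, eval_pow, eval_zero]
  push_cast
  ring

/-- The image of `1 - a (z - b)` under an operator preserving `ℰ^{a,b}`. -/
theorem exists_image_linear {a b : ℂ} {p q r : ℂ → ℂ}
    (h : SOPreserves p q r {z : ℂ | z ≠ b} (Eab a b)) :
    ∃ g ∈ Eab a b, ∀ z : ℂ, z ≠ b →
      q z * (-a) + r z * (1 - a * (z - b)) = g.eval z := by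
  obtain ⟨g, hg, hgz⟩ := h (1 - C a * (X - C b)) (by simp [Eab])
  refine ⟨g, hg, fun z hz => ?_⟩
  rw [← hgz z hz]
  simp [SOApply]

/-- `T` (components on `ℂ∖{b}`) preserves `ℰ^{a,b}` iff `p` agrees with a
polynomial and there are polynomials `q₀, r₀` with
`q = q₀ + p′ − 2p/(z−b)`, `r = r₀ − 2a·p/(z−b)`, `q₀(b) = 2a·p(b)`, and
`r₀′(b) = a·q₀′(b) + a·p″(b) − a²·p′(b)`. -/
theorem stmt10 (a b : ℂ) (p q r : ℂ → ℂ) :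
    SOPreserves p q r {z : ℂ | z ≠ b} (Eab a b) ↔
      ∃ P q0 r0 : Polynomial ℂ,
        (∀ z : ℂ, z ≠ b → p z = P.eval z) ∧
        (∀ z : ℂ, z ≠ b →
          q z = q0.eval z + (Polynomial.derivative P).eval z - 2 * P.eval z / (z - b)) ∧
        (∀ z : ℂ, z ≠ b → r z = r0.eval z - 2 * a * P.eval z / (z - b)) ∧
        q0.eval b = 2 * a * P.eval b ∧
        (Polynomial.derivative r0).eval b =
          a * (Polynomial.derivative q0).eval b
            + a * (Polynomial.derivative (Polynomial.derivative P)).eval b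
            - a ^ 2 * (Polynomial.derivative P).eval b := by
  refine ⟨fun h => ?_, fun ⟨P, q0, r0, hp, hq, hr, hq0, hr0⟩ =>
    SOPreserves_Eab_of_form hp hq hr hq0 hr0⟩
  obtain ⟨g0, hg0, e0⟩ := exists_image_linear h
  obtain ⟨g2, hg2, e2⟩ := exists_image_pow h 0
  obtain ⟨g3, hg3, e3⟩ := exists_image_pow h 1
  obtain ⟨g4, hg4, e4⟩ := exists_image_pow h 2
  obtain ⟨g5, hg5, e5⟩ := exists_image_pow h 3
  norm_num at e2 e3 e4 e5
  have ht : (X - C b : Polynomial ℂ) ≠ 0 := X_sub_C_ne_zero b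
  -- The images of `t², …, t⁵` are `t ^ (k - 2)` times the values at `k` of a quadratic in `k`,
  -- hence their twisted third difference vanishes.
  have I1 : g5 = (X - C b) * (3 * g4 - 3 * (X - C b) * g3 + (X - C b) ^ 2 * g2) := by
    refine poly_eq_of_eval_off b fun z hz => ?_
    simp only [eval_mul, eval_add, eval_sub, eval_X, eval_C, eval_pow, eval_ofNat,
      ← e2 z hz, ← e3 z hz, ← e4 z hz, ← e5 z hz]
    ring
  obtain ⟨h5, rfl⟩ := exists_sq_mul_of_mem_Eab hg5 (by simp [I1])
  have I2 : (X - C b) * h5 = 3 * g4 - 3 * (X - C b) * g3 + (X - C b) ^ 2 * g2 := by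
    apply mul_left_cancel₀ ht
    linear_combination I1
  obtain ⟨h4, rfl⟩ := exists_sq_mul_of_mem_Eab hg4
    (by simpa using congrArg (eval b) I2)
  -- The coefficients `p, q, r` are also determined by `g₂, g₃, g₄`, which determines `g₀`.
  have I3 : (X - C b) ^ 3 * g0 = -8 * g3 + (X - C b) * (6 * g2 + 3 * h4
      - C a * (3 * (X - C b) * g2 - 3 * g3 + (X - C b) * h4)) := by
    refine poly_eq_of_eval_off b fun z hz => ?_
    have hz' : z - b ≠ 0 := sub_ne_zero.mpr hz
    have e4' := e4 z hz
    simp only [eval_mul, eval_add, eval_sub, eval_X, eval_C, eval_pow, eval_neg,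
      eval_ofNat] at e4' ⊢
    have e4'' : h4.eval z = p z * 12 + q z * (4 * (z - b)) + r z * (z - b) ^ 2 := by
      apply mul_left_cancel₀ (pow_ne_zero 2 hz')
      linear_combination -e4'
    rw [← e0 z hz, ← e2 z hz, ← e3 z hz, e4'']
    ring
  obtain ⟨h3, rfl⟩ := exists_sq_mul_of_mem_Eab hg3
    (by simpa using congrArg (eval b) I3)
  have I4 : (X - C b) ^ 2 * g0 = -8 * (X - C b) * h3 + (6 * g2 + 3 * h4
      - C a * (X - C b) * (3 * g2 - 3 * (X - C b) * h3 + h4)) := by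
    apply mul_left_cancel₀ ht
    linear_combination I3
  -- the residue condition `2 g₂ + h₄ = t m`
  obtain ⟨m, hm⟩ : ∃ m, 2 * g2 + h4 = (X - C b) * m := by
    refine exists_mul_of_eval_eq_zero ?_
    have := congrArg (eval b) I4
    simp at this ⊢
    linear_combination -this / 3
  obtain rfl : h4 = (X - C b) * m - 2 * g2 := by linear_combination hm
  obtain ⟨P, hP⟩ : ∃ P : Polynomial ℂ, 2 * P = (X - C b) * m - 2 * (X - C b) * h3 - g2 := by
    refine ⟨C (1 / 2) * ((X - C b) * m - 2 * (X - C b) * h3 - g2), ?_⟩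
    rw [← mul_assoc, show (2 : Polynomial ℂ) * C (1 / 2) = 1 by
      rw [← C_ofNat, ← C_mul]; norm_num, one_mul]
  obtain rfl : g2 = (X - C b) * m - 2 * (X - C b) * h3 - 2 * P := by linear_combination hP
  have I5 : 3 * m - 8 * h3 + 2 * C a * P
      = (X - C b) * (g0 + C a * (3 * m - 8 * h3) + C a * (3 * h3 - m)) := by
    apply mul_left_cancel₀ ht
    linear_combination -I4
  -- values at `b` of `I5`, of its derivative, and of the membership conditions
  have J0 : 3 * m.eval b - 8 * h3.eval b + 2 * a * P.eval b = 0 := by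
    simpa using congrArg (eval b) I5
  have J1 : 3 * (derivative m).eval b - 8 * (derivative h3).eval b
      + 2 * a * (derivative P).eval b = g0.eval b + a * (3 * m.eval b - 8 * h3.eval b)
      + a * (3 * h3.eval b - m.eval b) := by
    simpa [derivative_mul] using congrArg (fun w => (derivative w).eval b) I5
  have K0 : (derivative g0).eval b + a * g0.eval b = 0 := hg0
  have K2 : m.eval b - 2 * h3.eval b - 2 * (derivative P).eval b - 2 * a * P.eval b = 0 := by
    simp [Eab, derivative_mul] at hg2
    linear_combination hg2
  have hp : ∀ z : ℂ, z ≠ b → p z = P.eval z := by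
    intro z hz
    have hz' : z - b ≠ 0 := sub_ne_zero.mpr hz
    have e2' := e2 z hz
    have e3' := e3 z hz
    have e4' := e4 z hz
    simp only [eval_mul, eval_sub, eval_X, eval_C, eval_pow, eval_ofNat] at e2' e3' e4'
    apply mul_left_cancel₀ (pow_ne_zero 2 hz')
    linear_combination (e4' - 2 * (z - b) * e3' + (z - b) ^ 2 * e2') / 2
  have hq : ∀ z : ℂ, z ≠ b →
      q z * (z - b) = (z - b) * (3 * h3.eval z - m.eval z) - 2 * P.eval z := by
    intro z hz
    have hz' : z - b ≠ 0 := sub_ne_zero.mpr hz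
    have e2' := e2 z hz
    have e3' := e3 z hz
    simp only [eval_mul, eval_sub, eval_X, eval_C, eval_pow, eval_ofNat] at e2' e3'
    apply mul_left_cancel₀ hz'
    linear_combination e3' - (z - b) * e2' - 4 * (z - b) * hp z hz
  refine ⟨P, 3 * h3 - m - derivative P,
    g0 + C a * (3 * m - 8 * h3) + C a * (3 * h3 - m), hp, ?_, ?_, ?_, ?_⟩
  · intro z hz
    have hz' : z - b ≠ 0 := sub_ne_zero.mpr hz
    simp only [eval_mul, eval_sub, eval_ofNat]
    field_simp
    linear_combination hq z hz
  · intro z hz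
    have hz' : z - b ≠ 0 := sub_ne_zero.mpr hz
    have e2' := e2 z hz
    have I5' := congrArg (eval z) I5
    simp only [eval_mul, eval_add, eval_sub, eval_X, eval_C, eval_ofNat] at e2' I5' ⊢
    field_simp
    apply mul_left_cancel₀ hz'
    linear_combination e2' - 2 * hp z hz - 2 * hq z hz + (z - b) * I5'
  · simp
    linear_combination -J0 / 2 + K2 / 2
  · simp [derivative_mul]
    linear_combination K0 + a * J1 + a ^ 2 * (J0 + K2) / 2
end
end

section
/- Let a, b ∈ ℂ. A second order operator T with components defined on ℂ∖{b} preserves ℰ^{a,b} if and only if T is a finite linear combination of the following operators: D_zz + (2a − 2/(z−b))·D_z − 2a/(z−b); (z−b)·D_zz + (a(z−b) − 1)·D_z; (z−b)ᵏ·D_zz for k ≥ 2; (z−b)·(D_z + a); (z−b)ᵏ·D_z for k ≥ 2; 1; and multiplication by (z−b)ᵏ for k ≥ 2. -/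
/-!
Put `t = z - b`; then `f ∈ ℰ^{a,b}` iff `f = c (1 - a t) + t² h` for a constant `c` and a
polynomial `h` (`Eab_decomp`). Substituting this shows directly that each listed operator sends
`f` to a polynomial in `ℰ^{a,b}`.

Conversely, translate to `b = 0` (`SOPreserves.shift`). The images `g₂, g₃, g₄` of `z², z³, z⁴`
determine the components by elimination, and show that `z⁴p, z⁴q, z⁴r` agree off `0` with
polynomials `P, Q, R` (`exists_clearing`). Comparing the coefficients of `z⁰, …, z⁵` in
`P f″ + Q f′ + R f = z⁴ T[f]`, for `f = 1 - a z, z², z³, z⁴` and `T[f] ∈ ℰ^{a,0}`, kills all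
the poles other than those of the first operator, and yields exactly the linear relations among
the low-order coefficients that the list encodes (`components_of_preserves`).
-/

open Polynomial

noncomputable section

/-- Polynomials agreeing off `0` are equal. -/
lemma poly_eq_of_ne_zero {F G : ℂ[X]} (h : ∀ z : ℂ, z ≠ 0 → F.eval z = G.eval z) : F = G := by
  have : X * F = X * G := by
    apply Polynomial.funext
    intro z
    by_cases hz : z = 0
    · simp [hz]
    · simp [h z hz]
  exact mul_left_cancel₀ X_ne_zero this

/-- The Taylor expansion of a polynomial at `0` to order five, with remainder `z⁶ U`. -/
lemma low_expansion (P : ℂ[X]) : ∃ U : ℂ[X], ∀ z : ℂ, P.eval z = P.coeff 0 + P.coeff 1 * z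
    + P.coeff 2 * z ^ 2 + P.coeff 3 * z ^ 3 + P.coeff 4 * z ^ 4 + P.coeff 5 * z ^ 5
    + z ^ 6 * U.eval z := by
  have key : ∀ (F : ℂ[X]) (z : ℂ), F.eval z = F.divX.eval z * z + F.coeff 0 := by
    intro F z
    conv_lhs => rw [← F.divX_mul_X_add]
    simp
  refine ⟨P.divX.divX.divX.divX.divX.divX, fun z => ?_⟩
  rw [key P, key P.divX, key P.divX.divX, key P.divX.divX.divX, key P.divX.divX.divX.divX,
    key P.divX.divX.divX.divX.divX]
  simp only [coeff_divX]
  ring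

lemma sq_mul_eval_eq_sum (U : ℂ[X]) (m : ℕ) (hm : U.natDegree + 2 ≤ m) (t : ℂ) :
    t ^ 2 * U.eval t = ∑ k ∈ Finset.Icc 2 m, U.coeff (k - 2) * t ^ k := by
  rw [eval_eq_sum_range' (n := m - 1) (by omega), Finset.mul_sum,
    ← Finset.Ico_add_one_right_eq_Icc, Finset.sum_Ico_eq_sum_range]
  refine Finset.sum_congr (by congr 1) fun i _ => ?_
  rw [Nat.add_sub_cancel_left]
  ring

/-- Elements of `ℰ^{a,b}` are the first-order part `c (1 - a (z-b))`, with `c = f(b)`, plus a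
multiple of `(z-b)²`. -/
lemma Eab_decomp {a b : ℂ} {f : ℂ[X]} (hf : f ∈ Eab a b) :
    ∃ (c : ℂ) (h : ℂ[X]), f = C c * (1 - C a * (X - C b)) + (X - C b) ^ 2 * h := by
  have hf' : (derivative f).eval b + a * f.eval b = 0 := hf
  have h1 : (X - C b) ∣ f - C (f.eval b) * (1 - C a * (X - C b)) := by
    rw [dvd_iff_isRoot]
    simp
  obtain ⟨G, hG⟩ := h1
  -- the quotient vanishes at `b` because the derivative of the left side does
  have h2 : (X - C b) ∣ G := by
    rw [dvd_iff_isRoot]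
    have h3 := congrArg (fun F => (derivative F).eval b) hG
    simp at h3
    rw [IsRoot.def, ← h3]
    linear_combination hf'
  obtain ⟨h, rfl⟩ := h2
  exact ⟨f.eval b, h, by linear_combination hG⟩

/-- Translation `z = t + b` reduces to `b = 0`. -/
lemma SOPreserves.shift {a b : ℂ} {p q r : ℂ → ℂ}
    (hT : SOPreserves p q r {z : ℂ | z ≠ b} (Eab a b)) :
    SOPreserves (fun t => p (t + b)) (fun t => q (t + b)) (fun t => r (t + b))
      {z : ℂ | z ≠ 0} (Eab a 0) := by
  intro f hf
  have hf' : (derivative f).eval 0 + a * f.eval 0 = 0 := hf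
  obtain ⟨g, hg, hgT⟩ := hT (f.comp (X - C b)) (by
    change (derivative (f.comp (X - C b))).eval b + a * (f.comp (X - C b)).eval b = 0
    simpa [derivative_comp] using hf')
  have hg' : (derivative g).eval b + a * g.eval b = 0 := hg
  refine ⟨g.comp (X + C b), ?_, ?_⟩
  · change (derivative (g.comp (X + C b))).eval 0 + a * (g.comp (X + C b)).eval 0 = 0
    simpa [derivative_comp] using hg'
  · intro z hz
    have hz' : z + b ≠ b := by simpa using hz
    have := hgT (z + b) hz'
    simp [SOApply, derivative_comp] at this
    simpa [SOApply] using this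

/-- After multiplication by `z⁴` the components of an operator preserving `ℰ^{a,0}` become
polynomials `P, Q, R`. The numerator `S = g₄ - 2 z g₃ + z² g₂`, with `gₖ = T[zᵏ]`, equals
`2 z² p`. -/
lemma exists_clearing {a : ℂ} {p q r : ℂ → ℂ}
    (hT : SOPreserves p q r {z : ℂ | z ≠ 0} (Eab a 0)) :
    ∃ P Q R : ℂ[X], ∀ z : ℂ, z ≠ 0 →
      z ^ 4 * p z = P.eval z ∧ z ^ 4 * q z = Q.eval z ∧ z ^ 4 * r z = R.eval z := by
  obtain ⟨g2, -, h2⟩ := hT (X ^ 2) (by simp [Eab])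
  obtain ⟨g3, -, h3⟩ := hT (X ^ 3) (by simp [Eab])
  obtain ⟨g4, -, h4⟩ := hT (X ^ 4) (by simp [Eab])
  set S : ℂ[X] := g4 - 2 * X * g3 + X ^ 2 * g2 with hS
  refine ⟨C (1 / 2) * X ^ 2 * S, X ^ 2 * (g3 - X * g2) - 2 * X * S,
    3 * X ^ 2 * g2 + 3 * S - 2 * X * g3, fun z hz => ?_⟩
  have e2 := h2 z hz
  have e3 := h3 z hz
  have e4 := h4 z hz
  simp [SOApply] at e2 e3 e4
  simp only [hS, eval_add, eval_sub, eval_mul, eval_pow, eval_X, eval_C, eval_ofNat,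
    ← e2, ← e3, ← e4]
  refine ⟨?_, ?_, ?_⟩ <;> ring

/-- The normal form of the components of an operator preserving `ℰ^{a,0}`: a sum of the listed
operators, where `z² U`, `z² V`, `z² W` collect the families `k ≥ 2`. -/
lemma components_of_preserves {a : ℂ} {p q r : ℂ → ℂ}
    (hT : SOPreserves p q r {z : ℂ | z ≠ 0} (Eab a 0)) :
    ∃ (c1 c2 c4 c7 : ℂ) (U V W : ℂ[X]), ∀ z : ℂ, z ≠ 0 →
      p z = c1 + c2 * z + z ^ 2 * U.eval z ∧
      q z = c1 * (2 * a - 2 / z) + c2 * (a * z - 1) + c4 * z + z ^ 2 * V.eval z ∧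
      r z = c1 * (-(2 * a / z)) + c4 * a * z + c7 + z ^ 2 * W.eval z := by
  obtain ⟨P, Q, R, hPQR⟩ := exists_clearing hT
  have key : ∀ f ∈ Eab a 0, ∃ g : ℂ[X], g.coeff 1 + a * g.coeff 0 = 0 ∧
      derivative (derivative f) * P + derivative f * Q + f * R = X ^ 4 * g := by
    intro f hf
    obtain ⟨g, hg, h⟩ := hT f hf
    have hg' : (derivative g).eval 0 + a * g.eval 0 = 0 := hg
    refine ⟨g, ?_, poly_eq_of_ne_zero fun z hz => ?_⟩
    · rw [← coeff_zero_eq_eval_zero, ← coeff_zero_eq_eval_zero, coeff_derivative] at hg'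
      simpa using hg'
    · obtain ⟨h1, h2, h3⟩ := hPQR z hz
      have h4 := h z hz
      simp only [SOApply] at h4
      simp only [eval_add, eval_mul, eval_pow, eval_X, ← h1, ← h2, ← h3, ← h4]
      ring
  obtain ⟨g0, m0, k0⟩ := key (1 - C a * X) (by simp [Eab])
  obtain ⟨g2, m2, k2⟩ := key (X ^ 2) (by simp [Eab])
  obtain ⟨g3, m3, k3⟩ := key (X ^ 3) (by simp [Eab])
  obtain ⟨g4, m4, k4⟩ := key (X ^ 4) (by simp [Eab])
  replace k0 : R - C a * Q - C a * (X ^ 1 * R) = X ^ 4 * g0 := by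
    rw [← k0]; simp; ring
  replace k2 : C 2 * P + C 2 * (X ^ 1 * Q) + X ^ 2 * R = X ^ 4 * g2 := by
    rw [← k2]; simp [C_ofNat]; ring
  replace k3 : C 6 * (X ^ 1 * P) + C 3 * (X ^ 2 * Q) + X ^ 3 * R = X ^ 4 * g3 := by
    rw [← k3]; simp [C_ofNat]; ring
  replace k4 : C 12 * (X ^ 2 * P) + C 4 * (X ^ 3 * Q) + X ^ 4 * R = X ^ 4 * g4 := by
    rw [← k4]; simp [C_ofNat]; ring
  -- `e0n` and `ekn` compare the coefficients of `z ^ n` in the identities for `1 - a z` (`k0`)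
  -- and for `z ^ k` with `k = 2, 3, 4`
  have e00 : R.coeff 0 - a * Q.coeff 0 = 0 := by
    simpa [coeff_X_pow_mul'] using congrArg (fun F => F.coeff 0) k0
  have e01 : R.coeff 1 - a * Q.coeff 1 - a * R.coeff 0 = 0 := by
    simpa [coeff_X_pow_mul'] using congrArg (fun F => F.coeff 1) k0
  have e02 : R.coeff 2 - a * Q.coeff 2 - a * R.coeff 1 = 0 := by
    simpa [coeff_X_pow_mul'] using congrArg (fun F => F.coeff 2) k0
  have e03 : R.coeff 3 - a * Q.coeff 3 - a * R.coeff 2 = 0 := by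
    simpa [coeff_X_pow_mul'] using congrArg (fun F => F.coeff 3) k0
  have e04 : R.coeff 4 - a * Q.coeff 4 - a * R.coeff 3 = g0.coeff 0 := by
    simpa [coeff_X_pow_mul'] using congrArg (fun F => F.coeff 4) k0
  have e05 : R.coeff 5 - a * Q.coeff 5 - a * R.coeff 4 = g0.coeff 1 := by
    simpa [coeff_X_pow_mul'] using congrArg (fun F => F.coeff 5) k0
  have e20 : 2 * P.coeff 0 = 0 := by
    simpa [coeff_X_pow_mul'] using congrArg (fun F => F.coeff 0) k2
  have e21 : 2 * P.coeff 1 + 2 * Q.coeff 0 = 0 := by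
    simpa [coeff_X_pow_mul'] using congrArg (fun F => F.coeff 1) k2
  have e22 : 2 * P.coeff 2 + 2 * Q.coeff 1 + R.coeff 0 = 0 := by
    simpa [coeff_X_pow_mul'] using congrArg (fun F => F.coeff 2) k2
  have e23 : 2 * P.coeff 3 + 2 * Q.coeff 2 + R.coeff 1 = 0 := by
    simpa [coeff_X_pow_mul'] using congrArg (fun F => F.coeff 3) k2
  have e24 : 2 * P.coeff 4 + 2 * Q.coeff 3 + R.coeff 2 = g2.coeff 0 := by
    simpa [coeff_X_pow_mul'] using congrArg (fun F => F.coeff 4) k2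
  have e25 : 2 * P.coeff 5 + 2 * Q.coeff 4 + R.coeff 3 = g2.coeff 1 := by
    simpa [coeff_X_pow_mul'] using congrArg (fun F => F.coeff 5) k2
  have e32 : 6 * P.coeff 1 + 3 * Q.coeff 0 = 0 := by
    simpa [coeff_X_pow_mul'] using congrArg (fun F => F.coeff 2) k3
  have e33 : 6 * P.coeff 2 + 3 * Q.coeff 1 + R.coeff 0 = 0 := by
    simpa [coeff_X_pow_mul'] using congrArg (fun F => F.coeff 3) k3
  have e34 : 6 * P.coeff 3 + 3 * Q.coeff 2 + R.coeff 1 = g3.coeff 0 := by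
    simpa [coeff_X_pow_mul'] using congrArg (fun F => F.coeff 4) k3
  have e35 : 6 * P.coeff 4 + 3 * Q.coeff 3 + R.coeff 2 = g3.coeff 1 := by
    simpa [coeff_X_pow_mul'] using congrArg (fun F => F.coeff 5) k3
  have e44 : 12 * P.coeff 2 + 4 * Q.coeff 1 + R.coeff 0 = g4.coeff 0 := by
    simpa [coeff_X_pow_mul'] using congrArg (fun F => F.coeff 4) k4
  have e45 : 12 * P.coeff 3 + 4 * Q.coeff 2 + R.coeff 1 = g4.coeff 1 := by
    simpa [coeff_X_pow_mul'] using congrArg (fun F => F.coeff 5) k4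
  have P0 : P.coeff 0 = 0 := by linear_combination e20 / 2
  have P1 : P.coeff 1 = 0 := by linear_combination e32 / 3 - e21 / 2
  have Q0 : Q.coeff 0 = 0 := by linear_combination e21 / 2 - P1
  have R0 : R.coeff 0 = 0 := by linear_combination e00 + a * Q0
  have P2 : P.coeff 2 = 0 := by linear_combination (e33 - R0) / 3 - (e22 - R0) / 2
  have Q1 : Q.coeff 1 = 0 := by linear_combination (e22 - R0) / 2 - P2
  have R1 : R.coeff 1 = 0 := by linear_combination e01 + a * Q1 + a * R0
  have P3 : P.coeff 3 = 0 := by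
    linear_combination (e45 + a * e44 + m4 - R1 - a * (12 * P2 + 4 * Q1 + R0)) / 8 - (e23 - R1) / 4
  have Q2 : Q.coeff 2 = 0 := by linear_combination (e23 - R1) / 2 - P3
  have R2 : R.coeff 2 = 0 := by linear_combination e02 + a * Q2 + a * R1
  have Q3 : Q.coeff 3 = -2 * P.coeff 4 := by
    linear_combination (e35 + a * e34 + m3 - R2 - a * (6 * P3 + 3 * Q2 + R1)) / 3
  have R3 : R.coeff 3 = -2 * a * P.coeff 4 := by linear_combination e03 + a * Q3 + a * R2
  have Q4 : Q.coeff 4 = 2 * a * P.coeff 4 - P.coeff 5 := by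
    linear_combination (e25 + a * e24 + m2 - R3 - a * (2 * Q3 + R2)) / 2
  have R5 : R.coeff 5 = a * Q.coeff 5 - a ^ 2 * P.coeff 5 := by
    linear_combination e05 + a * e04 + m0 + a ^ 2 * Q4 + a ^ 2 * R3
  obtain ⟨U, hU⟩ := low_expansion P
  obtain ⟨V, hV⟩ := low_expansion Q
  obtain ⟨W, hW⟩ := low_expansion R
  refine ⟨P.coeff 4, P.coeff 5, Q.coeff 5 - a * P.coeff 5, R.coeff 4, U, V, W, fun z hz => ?_⟩
  obtain ⟨hp, hq, hr⟩ := hPQR z hz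
  have hz4 : z ^ 4 ≠ 0 := pow_ne_zero 4 hz
  refine ⟨mul_left_cancel₀ hz4 ?_, mul_left_cancel₀ hz4 ?_, mul_left_cancel₀ hz4 ?_⟩
  · rw [hp, hU, P0, P1, P2, P3]
    ring
  · rw [hq, hV, Q0, Q1, Q2, Q3, Q4]
    field_simp
    ring
  · rw [hr, hW, R0, R1, R2, R3, R5]
    field_simp
    ring

/-- The listed operators preserve `ℰ^{a,b}`, with the polynomial coefficients of the families
`k ≥ 2` written as `(z-b)² U`, `(z-b)² V`, `(z-b)² W`. -/
lemma preserves_of_components {a b : ℂ} {p q r : ℂ → ℂ} {c1 c2 c4 c7 : ℂ} {U V W : ℂ[X]}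
    (hT : ∀ (f : ℂ[X]) (z : ℂ), z ≠ b → SOApply p q r f z =
      c1 * ((derivative (derivative f)).eval z + (2 * a - 2 / (z - b)) * (derivative f).eval z
        - 2 * a / (z - b) * f.eval z)
      + c2 * ((z - b) * (derivative (derivative f)).eval z
        + (a * (z - b) - 1) * (derivative f).eval z)
      + (z - b) ^ 2 * U.eval z * (derivative (derivative f)).eval z
      + c4 * ((z - b) * ((derivative f).eval z + a * f.eval z))
      + (z - b) ^ 2 * V.eval z * (derivative f).eval z
      + c7 * f.eval z + (z - b) ^ 2 * W.eval z * f.eval z) :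
    SOPreserves p q r {z : ℂ | z ≠ b} (Eab a b) := by
  intro f hf
  obtain ⟨c, h, hfe⟩ := Eab_decomp hf
  have hf' : (derivative f).eval b + a * f.eval b = 0 := hf
  have d1 : derivative f = -(C c * C a) + 2 * (X - C b) * h + (X - C b) ^ 2 * derivative h := by
    rw [hfe]
    simp [derivative_pow, C_ofNat]
    ring
  have d2 : derivative (derivative f) = 2 * h + 4 * (X - C b) * derivative h
      + (X - C b) ^ 2 * derivative (derivative h) := by
    rw [d1]
    simp [derivative_pow, C_ofNat]
    ring
  -- the image of `f` under the first operator, where the factors `(z - b)⁻¹` have cancelled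
  set G : ℂ[X] := -2 * h + 2 * (X - C b) * derivative h
    + (X - C b) ^ 2 * derivative (derivative h) + 2 * C a * (X - C b) * h
    + 2 * C a * (X - C b) ^ 2 * derivative h with hG
  refine ⟨C c1 * G + C c2 * ((X - C b) * derivative (derivative f)
      + (C a * (X - C b) - 1) * derivative f)
      + (X - C b) ^ 2 * U * derivative (derivative f)
      + C c4 * ((X - C b) * (derivative f + C a * f))
      + (X - C b) ^ 2 * V * derivative f + C c7 * f + (X - C b) ^ 2 * W * f, ?_, ?_⟩
  · change eval b (derivative _) + a * eval b _ = 0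
    simp [hG, derivative_pow, C_ofNat]
    linear_combination (c4 + c7) * hf'
  · intro z hz
    have hz' : z - b ≠ 0 := sub_ne_zero.mpr hz
    have hGz : G.eval z = (derivative (derivative f)).eval z
        + (2 * a - 2 / (z - b)) * (derivative f).eval z - 2 * a / (z - b) * f.eval z := by
      rw [d2, d1, hfe, hG]
      simp
      field_simp
      ring
    rw [hT f z hz, ← hGz]
    simp

/-- `T` preserves `ℰ^{a,b}` iff `T` is a finite linear combination of the
listed operators (the two families indexed by `k ≥ 2` being encoded by finite sums of
the form `Σ_{2 ≤ k ≤ m} cₖ (z−b)ᵏ`). -/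
theorem stmt11 (a b : ℂ) (p q r : ℂ → ℂ) :
    SOPreserves p q r {z : ℂ | z ≠ b} (Eab a b) ↔
      ∃ (c1 c2 c4 c7 : ℂ) (m : ℕ) (A B C : ℕ → ℂ),
        ∀ (f : Polynomial ℂ) (z : ℂ), z ≠ b →
          SOApply p q r f z =
            c1 * ((Polynomial.derivative (Polynomial.derivative f)).eval z
                  + (2 * a - 2 / (z - b)) * (Polynomial.derivative f).eval z
                  - 2 * a / (z - b) * f.eval z)
            + c2 * ((z - b) * (Polynomial.derivative (Polynomial.derivative f)).eval z
                  + (a * (z - b) - 1) * (Polynomial.derivative f).eval z)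
            + (∑ k ∈ Finset.Icc 2 m, A k * (z - b) ^ k)
                * (Polynomial.derivative (Polynomial.derivative f)).eval z
            + c4 * ((z - b) * ((Polynomial.derivative f).eval z + a * f.eval z))
            + (∑ k ∈ Finset.Icc 2 m, B k * (z - b) ^ k)
                * (Polynomial.derivative f).eval z
            + c7 * f.eval z
            + (∑ k ∈ Finset.Icc 2 m, C k * (z - b) ^ k) * f.eval z := by
  constructor
  · intro hT
    obtain ⟨c1, c2, c4, c7, U, V, W, h⟩ := components_of_preserves hT.shift
    refine ⟨c1, c2, c4, c7, U.natDegree + V.natDegree + W.natDegree + 2,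
      fun k => U.coeff (k - 2), fun k => V.coeff (k - 2), fun k => W.coeff (k - 2),
      fun f z hz => ?_⟩
    obtain ⟨hp, hq, hr⟩ := h (z - b) (sub_ne_zero.mpr hz)
    simp only [sub_add_cancel] at hp hq hr
    rw [← sq_mul_eval_eq_sum U _ (by omega), ← sq_mul_eval_eq_sum V _ (by omega),
      ← sq_mul_eval_eq_sum W _ (by omega), SOApply, hp, hq, hr]
    ring
  · rintro ⟨c1, c2, c4, c7, m, A, B, D, h⟩
    have key : ∀ (A : ℕ → ℂ) (z : ℂ), ∑ k ∈ Finset.Icc 2 m, A k * (z - b) ^ k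
        = (z - b) ^ 2 * (∑ k ∈ Finset.Icc 2 m, C (A k) * (X - C b) ^ (k - 2)).eval z := by
      intro A z
      rw [eval_finsetSum, Finset.mul_sum]
      refine Finset.sum_congr rfl fun k hk => ?_
      obtain ⟨j, rfl⟩ := Nat.exists_eq_add_of_le (Finset.mem_Icc.mp hk).1
      rw [Nat.add_sub_cancel_left]
      simp
      ring
    simp only [key] at h
    exact preserves_of_components h
end
end

section
/- Let a, b ∈ ℂ, let n ≥ 4 be an integer, and let T be a second order operator with components defined on ℂ∖{b}. If T preserves ℰ^{a,b}ₙ, then T preserves the full infinite-dimensional space ℰ^{a,b}. -/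
/-!
Put `u = z - b`. The space `ℰ^{a,b}` is spanned by `1 - a u` and the powers `u ^ k`, `k ≥ 2`; of these
`1 - a u, u², u³, u⁴` lie in `ℰ^{a,b}ₙ` as soon as `n ≥ 4`. Let `g₁, g₂, g₃, g₄ ∈ ℰ^{a,b}` be their images.
Since `u ^ (-k) T[u ^ k]` is quadratic in `k`, Lagrange interpolation at `k = 2, 3, 4` expresses `T[u ^ k]`
for `k = m + 4` as `u ^ m` times a combination of `u² g₂`, `u g₃` and `g₄`, which is a polynomial.

For `m ≥ 1` this polynomial is divisible by `u²`, hence belongs to `ℰ^{a,b}`, provided `g₄(b) = 0`.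
That vanishing comes from `1 - a u`: solving for `p, q, r` in terms of `g₂, g₃, g₄` gives
`u⁴ g₁ = 3 g₄ - u (8 g₃ + a g₄) + u² (6 g₂ + 3 a g₃) - 3 a u³ g₂`, evaluated at `u = 0`.
The degree bounds on the `gᵢ` play no role.
-/

open Polynomial

noncomputable section

/-- `T[f]` agrees off `b` with an element of `ℰ^{a,b}`; membership of `f` itself is not required. -/
def MapsIntoEab (a b : ℂ) (p q r : ℂ → ℂ) (f : Polynomial ℂ) : Prop :=
  ∃ g ∈ Eab a b, ∀ z ∈ {z : ℂ | z ≠ b}, SOApply p q r f z = g.eval z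

section
variable {a b : ℂ} {p q r : ℂ → ℂ}

lemma MapsIntoEab.add {f₁ f₂ : Polynomial ℂ} (h₁ : MapsIntoEab a b p q r f₁)
    (h₂ : MapsIntoEab a b p q r f₂) : MapsIntoEab a b p q r (f₁ + f₂) := by
  obtain ⟨g₁, hg₁, e₁⟩ := h₁
  obtain ⟨g₂, hg₂, e₂⟩ := h₂
  refine ⟨g₁ + g₂, ?_, fun z hz => ?_⟩
  · simp only [Eab, Set.mem_ofPred_eq, derivative_add, eval_add] at *
    linear_combination hg₁ + hg₂
  · rw [eval_add, ← e₁ z hz, ← e₂ z hz]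
    simp only [SOApply, derivative_add, eval_add]
    ring

lemma MapsIntoEab.C_mul {f : Polynomial ℂ} (c : ℂ) (h : MapsIntoEab a b p q r f) :
    MapsIntoEab a b p q r (C c * f) := by
  obtain ⟨g, hg, e⟩ := h
  refine ⟨C c * g, ?_, fun z hz => ?_⟩
  · simp only [Eab, Set.mem_ofPred_eq, derivative_C_mul, eval_mul, eval_C] at *
    linear_combination c * hg
  · rw [eval_mul, eval_C, ← e z hz]
    simp only [SOApply, derivative_C_mul, eval_mul, eval_C]
    ring

lemma sq_mul_mem_Eab (a b : ℂ) (h : Polynomial ℂ) : (X - C b) ^ 2 * h ∈ Eab a b := by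
  simp [Eab, derivative_mul, derivative_pow]

lemma SOApply_pow (m : ℕ) (z : ℂ) :
    SOApply p q r ((X - C b) ^ (m + 2)) z =
      (z - b) ^ m * ((m + 2) * (m + 1) * p z + (m + 2) * (z - b) * q z + (z - b) ^ 2 * r z) := by
  simp only [SOApply, derivative_pow, derivative_mul, derivative_sub, derivative_X, derivative_C,
    eval_mul, eval_pow, eval_sub, eval_X, eval_C, map_natCast, eval_natCast, eval_add]
  simp
  ring

lemma SOApply_linear (z : ℂ) :
    SOApply p q r (1 - C a * (X - C b)) z = -a * q z + (1 - a * (z - b)) * r z := by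
  simp [SOApply]
  ring

lemma exists_decomp {f : Polynomial ℂ} (hf : f ∈ Eab a b) :
    ∃ h : Polynomial ℂ, f = C (f.eval b) * (1 - C a * (X - C b)) + (X - C b) ^ 2 * h.comp (X - C b) := by
  have h0 : (f - C (f.eval b) * (1 - C a * (X - C b))).IsRoot b := by simp
  obtain ⟨f₁, hf₁⟩ := dvd_iff_isRoot.mpr h0
  have h1 : f₁.IsRoot b := by
    have := congrArg (fun g => (derivative g).eval b) hf₁
    simp at this
    simp only [Eab, Set.mem_ofPred_eq] at hf
    rw [IsRoot.def, ← this]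
    linear_combination hf
  obtain ⟨f₂, hf₂⟩ := dvd_iff_isRoot.mpr h1
  refine ⟨f₂.comp (X + C b), ?_⟩
  have : (f₂.comp (X + C b)).comp (X - C b) = f₂ := by
    rw [comp_assoc]; simp
  rw [this]
  rw [hf₂] at hf₁
  linear_combination hf₁

/-- Values on the spanning set `1 - a u, u², u³, …` determine the behaviour on `ℰ^{a,b}`. -/
lemma mapsInto_of_pow (hlin : MapsIntoEab a b p q r (1 - C a * (X - C b)))
    (hpow : ∀ m : ℕ, MapsIntoEab a b p q r ((X - C b) ^ (m + 2)))
    {f : Polynomial ℂ} (hf : f ∈ Eab a b) : MapsIntoEab a b p q r f := by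
  obtain ⟨h, e⟩ := exists_decomp hf
  rw [e]
  refine (hlin.C_mul _).add ?_
  clear e
  induction h using Polynomial.induction_on' with
  | add h₁ h₂ i₁ i₂ =>
    rw [add_comp, mul_add]
    exact i₁.add i₂
  | monomial k c =>
    have : (X - C b) ^ 2 * (monomial k c).comp (X - C b) = C c * (X - C b) ^ (k + 2) := by
      rw [monomial_comp]; ring
    rw [this]
    exact (hpow k).C_mul c

end

/-- for `n ≥ 4`, if `T` preserves `ℰ^{a,b}ₙ` then `T` preserves the full
space `ℰ^{a,b}`. -/
theorem stmt12 (a b : ℂ) (n : ℕ) (hn : 4 ≤ n) (p q r : ℂ → ℂ)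
    (h : SOPreserves p q r {z : ℂ | z ≠ b} (EabN a b n)) :
    SOPreserves p q r {z : ℂ | z ≠ b} (Eab a b) := by
  have hE : ∀ f ∈ EabN a b n, MapsIntoEab a b p q r f := fun f hf =>
    let ⟨g, hg, e⟩ := h f hf
    ⟨g, hg.1, e⟩
  have hpowMem : ∀ m : ℕ, m + 2 ≤ 4 → MapsIntoEab a b p q r ((X - C b) ^ (m + 2)) := by
    intro m hm
    refine hE _ ⟨?_, ?_⟩
    · have := sq_mul_mem_Eab a b ((X - C b) ^ m)
      rwa [← pow_add, add_comm] at this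
    · simp only [Pn, Set.mem_ofPred_eq, degree_pow, degree_X_sub_C]
      simp only [nsmul_eq_mul, mul_one]
      exact_mod_cast hm.trans hn
  have hlin : MapsIntoEab a b p q r (1 - C a * (X - C b)) := by
    refine hE _ ⟨by simp [Eab], ?_⟩
    refine (natDegree_le_iff_degree_le).mp ?_
    have : (1 - C a * (X - C b)).natDegree ≤ 1 := by compute_degree
    omega
  obtain ⟨g₁, -, e₁⟩ := id hlin
  obtain ⟨g₂, -, e₂⟩ := id (hpowMem 0 (by norm_num))
  obtain ⟨g₃, -, e₃⟩ := id (hpowMem 1 (by norm_num))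
  obtain ⟨g₄, -, e₄⟩ := id (hpowMem 2 (by norm_num))
  simp only [SOApply_linear] at e₁
  simp only [SOApply_pow] at e₂ e₃ e₄
  have key : (X - C b) ^ 4 * g₁ = C 3 * g₄ - (X - C b) * (C 8 * g₃ + C a * g₄)
      + (X - C b) ^ 2 * (C 6 * g₂ + C 3 * C a * g₃) - C 3 * C a * (X - C b) ^ 3 * g₂ := by
    refine eq_of_infinite_eval_eq _ _ (Set.Infinite.mono ?_ (Set.finite_singleton b).infinite_compl)
    intro z hz
    simp only [Set.mem_ofPred_eq, eval_mul, eval_add, eval_sub, eval_pow, eval_X, eval_C]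
    rw [← e₁ z hz, ← e₂ z hz, ← e₃ z hz, ← e₄ z hz]
    push_cast
    ring
  have hroot : g₄.IsRoot b := by
    have := congrArg (eval b) key
    simpa using this
  obtain ⟨w, rfl⟩ := dvd_iff_isRoot.mpr hroot
  refine fun f hf => mapsInto_of_pow hlin (fun m => ?_) hf
  rcases Nat.lt_or_ge m 3 with hm | hm
  · exact hpowMem m (by omega)
  obtain ⟨j, rfl⟩ := Nat.exists_eq_add_of_le' hm
  -- Lagrange interpolation at the nodes `2, 3, 4` of a quadratic, evaluated at `k = j + 5`.
  refine ⟨(X - C b) ^ 2 * ((X - C b) ^ j * (C (((j : ℂ) + 2) * (j + 1) / 2) * (X - C b) * g₂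
    - C (((j : ℂ) + 3) * (j + 1)) * g₃ + C (((j : ℂ) + 3) * (j + 2) / 2) * w)), sq_mul_mem_Eab a b _, ?_⟩
  intro z hz
  have e₂' := e₂ z hz
  have e₃' := e₃ z hz
  have e₄' := e₄ z hz
  rw [SOApply_pow]
  simp only [eval_mul, eval_add, eval_sub, eval_pow, eval_X, eval_C] at e₄' ⊢
  push_cast at e₂' e₃' e₄' ⊢
  linear_combination (z - b) ^ (j + 1) * ((j + 2) * (j + 1) / 2 * (z - b) ^ 2 * e₂'
    - (j + 3) * (j + 1) * (z - b) * e₃' + (j + 3) * (j + 2) / 2 * e₄')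
end
end
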